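/- (A priori estimate for the two-dimensional ansatz.) Let d = 2, i ∈ {2,3}, and i ≤ m ≤ n. Let g = (g_j)_{j=i}^m with g_j ∈ ΓL²_j symmetric and Σ_{j=i}^m ‖(−L₀)^{−1/2} g_j‖² < ∞, and define ũ = (ũ_j)_{j=i}^n recursively by ũ_{i−1} := 0 and, for i ≤ j ≤ n, ũ_j := S^ε A⁺_ε ũ_{j−1} + S^ε g_j (with g_j := 0 for j > m). Then there exist a constant C > 0 independent of n and ε, and ε₂(n) > 0, such that for every ε < ε₂(n): Σ_{j=i}^n ‖(−L₀)^{1/2} ũ_j‖² ≤ C Σ_{j=i}^m ‖(−L₀)^{−1/2} g_j‖². -/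

import Mathlib

open scoped BigOperators
open scoped Classical

noncomputable section

namespace SBE

/-- Lattice points of `ℤ^d`. -/
abbrev ZLat (d : ℕ) := Fin d → ℤ

/-- Kernels of the `n`-th chaos: functions on `n`-tuples of lattice points. -/
abbrev Chaos (d n : ℕ) := (Fin n → ZLat d) → ℂ

/-- Squared Euclidean norm of a lattice point. -/
def nsq {d : ℕ} (k : ZLat d) : ℝ := ∑ i, ((k i : ℝ))^2

/-- Euclidean norm of a lattice point. -/
def eN {d : ℕ} (k : ZLat d) : ℝ := Real.sqrt (nsq k)

/-- Supremum norm of a lattice point. -/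
def sN {d : ℕ} (k : ZLat d) : ℝ := ((Finset.univ.sup fun i => (k i).natAbs : ℕ) : ℝ)

/-- The norm used in the Fourier cutoff: Euclidean if `d = 2`, supremum otherwise. -/
def cutNorm (d : ℕ) (k : ZLat d) : ℝ := if d = 2 then eN k else sN k

/-- `w · k`. -/
def dotw {d : ℕ} (w : Fin d → ℝ) (k : ZLat d) : ℝ := ∑ i, w i * (k i : ℝ)

/-- `|k_{1:n}|² = Σ_i |k_i|²`. -/
def wSq {d n : ℕ} (k : Fin n → ZLat d) : ℝ := ∑ a, nsq (k a)

/-- The coupling constant `λ_ε`. -/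
def lam (d : ℕ) (ε : ℝ) : ℝ :=
  if d = 2 then (Real.sqrt (Real.log (1 / ε^2)))⁻¹ else ε ^ ((d:ℝ)/2 - 1)

/-- The Fourier cutoff indicator `J^ε_{ℓ,m}`. -/
def Jind (d : ℕ) (ε : ℝ) (l m : ZLat d) : ℝ :=
  if 0 < ε * cutNorm d l ∧ ε * cutNorm d l ≤ 1 ∧
     0 < ε * cutNorm d m ∧ ε * cutNorm d m ≤ 1 ∧
     0 < ε * cutNorm d (l + m) ∧ ε * cutNorm d (l + m) ≤ 1 then 1 else 0

/-- Symmetry of a kernel under permutation of its arguments. -/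
def Symm {d n : ℕ} (f : Chaos d n) : Prop :=
  ∀ (σ : Equiv.Perm (Fin n)) (k : Fin n → ZLat d), f (k ∘ σ) = f k

/-- A kernel vanishes whenever one of its arguments is the zero frequency
(i.e. it is really a function on `(ℤ^d_0)^n`). -/
def SuppOk {d n : ℕ} (f : Chaos d n) : Prop :=
  ∀ k : Fin n → ZLat d, (∃ a, k a = 0) → f k = 0

/-- Summand of `‖(-L₀)^s f‖²`. -/
def sobTerm {d n : ℕ} (s : ℝ) (f : Chaos d n) (k : Fin n → ZLat d) : ℝ :=
  (wSq k / 2) ^ (2*s) * ‖f k‖^2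

/-- `‖(-L₀)^s f‖² = n! Σ_k (|k_{1:n}|²/2)^{2s} |f(k)|²`. -/
def sobSq {d n : ℕ} (s : ℝ) (f : Chaos d n) : ℝ := (n.factorial : ℝ) * ∑' k, sobTerm s f k

/-- Remove the entries `i < j` from an `(n+2)`-tuple (order preservingly). -/
def remove2 {X : Type*} {n : ℕ} (k : Fin (n+2) → X) (i j : Fin (n+2)) (h : i < j) :
    Fin n → X :=
  fun a => k (j.succAbove ((Fin.castLT i
    (Nat.lt_of_lt_of_le (Fin.lt_def.mp h) (Nat.lt_succ_iff.mp j.isLt))).succAbove a))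

/-- The operator `A⁺_ε : ΓL²_{n+1} → ΓL²_{n+2}`. -/
def Aplus (d : ℕ) (w : Fin d → ℝ) (ε : ℝ) {n : ℕ} (f : Chaos d (n+1)) : Chaos d (n+2) :=
  fun k => -(2 * Complex.I / (((2*Real.pi) ^ ((d:ℝ)/2) : ℝ) : ℂ)) *
      ((lam d ε / ((n:ℝ)+2) : ℝ) : ℂ) *
    ∑ i : Fin (n+2), ∑ j : Fin (n+2),
      if h : i < j then
        ((dotw w (k i + k j) : ℝ) : ℂ) * ((Jind d ε (k i) (k j) : ℝ) : ℂ) *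
          f (Fin.cons (k i + k j) (remove2 k i j h))
      else 0

/-- The operator `A⁻_ε : ΓL²_{n+2} → ΓL²_{n+1}`. -/
def Aminus (d : ℕ) (w : Fin d → ℝ) (ε : ℝ) {n : ℕ} (f : Chaos d (n+2)) : Chaos d (n+1) :=
  fun k => (2 * Complex.I / (((2*Real.pi) ^ ((d:ℝ)/2) : ℝ) : ℂ)) *
      ((((n:ℝ)+2) * lam d ε : ℝ) : ℂ) *
    ∑ j : Fin (n+1), ((dotw w (k j) : ℝ) : ℂ) *
      ∑' l : ZLat d, ((Jind d ε l (k j - l) : ℝ) : ℂ) *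
        f (Fin.cons l (Fin.cons (k j - l) (fun a => k (j.succAbove a))))

/-- `L^ε(x) = λ_ε² log(1 + 1/(ε²x))`. -/
def Leps (ε x : ℝ) : ℝ := (lam 2 ε)^2 * Real.log (1 + 1/(ε^2 * x))

/-- `G(x) = c⁻¹ [(3cx/(2π) + 1)^{2/3} − 1]` (with `c = |w|²`). -/
def Gfun (c x : ℝ) : ℝ := c⁻¹ * ((3*c*x/(2*Real.pi) + 1) ^ ((2:ℝ)/3) - 1)

/-- `|w|²`. -/
def wnSq {d : ℕ} (w : Fin d → ℝ) : ℝ := ∑ i, (w i)^2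

/-- `(w·k)²_{1:n} = Σ_i (w·k_i)²`. -/
def wdotSq {d n : ℕ} (w : Fin d → ℝ) (k : Fin n → ZLat d) : ℝ := ∑ a, (dotw w (k a))^2

/-- Fourier multiplier of `S^ε = (−L₀ − L₀^w G^ε)⁻¹`. -/
def sigma' {n : ℕ} (w : Fin 2 → ℝ) (ε : ℝ) (k : Fin n → ZLat 2) : ℝ :=
  2 / (wSq k + wdotSq w k * Gfun (wnSq w) (Leps ε (wSq k / 2)))

/-- The operator `S^ε` acting diagonally on a kernel. -/
def SepsA (w : Fin 2 → ℝ) (ε : ℝ) {n : ℕ} (g : Chaos 2 n) : Chaos 2 n :=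
  fun k => ((sigma' w ε k : ℝ) : ℂ) * g k

/-!
The recursion is closed by the energy `‖(−L₀)^{1/2} ũ_j‖²` together with the quadratic form of the
effective diffusion `𝒟^ε := ½ Σ_a (w · k_a)² G(L^ε(|k|²/2))`. Since `S^ε = (−L₀ + 𝒟^ε)⁻¹`, Young's
inequality gives, for `u = S^ε (v + g)`,
`3 ‖(−L₀)^{1/2} u‖² + 4 ⟨𝒟^ε u, u⟩ ≤ 4 ‖(S^ε)^{1/2} v‖² + 16 ‖(−L₀)^{-1/2} g‖²`,
and for `v = A⁺_ε ũ_{j-1}` it remains to see that, for small `ε`, `‖(S^ε)^{1/2} A⁺_ε f‖²` is at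
most `⟨𝒟^ε f, f⟩ + ¼ ‖(−L₀)^{1/2} f‖²`; summing over `j` then telescopes.

In `|A⁺_ε f|²` the products of the terms of two different pairs of positions are negligible: their
lattice sums are bounded, while `λ_ε² → 0`. The squares lead to the sum of `σ_{n+1}` over the
ways of splitting a frequency `k₀` into `k₀ - l` and `l`. Up to errors absorbed by `λ_ε²` it is a
sum of inverses of an elliptic quadratic form in `l - k₀ / 2` with eigenvalues `1` and `1 + |w|² G`,
hence, counting lattice points in ellipses and integrating over their levels, it is at most the
integral of `π / (t √(1 + |w|² G(L^ε(t))))`. As `G' = 1 / (π √(1 + |w|² G))`, the factor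
`λ_ε² / π²` in front turns this integral into `G(L^ε)` again.
-/

section LatticePointsInEllipses

open MeasureTheory Matrix

variable {ι : Type*} [Fintype ι]

lemma card_le_volume_of_unit_cells_subset (S : Finset (ι → ℤ)) (s : ι → ℝ) (E : Set (ι → ℝ))
    (hE : ∀ l ∈ S, Set.univ.pi (fun a => Set.Ico (s a + l a) (s a + l a + 1)) ⊆ E) :
    (S.card : ENNReal) ≤ volume E := by
  let cell (l : ι → ℤ) : Set (ι → ℝ) := Set.univ.pi fun a => Set.Ico (s a + l a) (s a + l a + 1)
  have volume_cell (l : ι → ℤ) : volume (cell l) = 1 := by simp [cell, Real.volume_pi_Ico]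
  have cell_disjoint : (S : Set (ι → ℤ)).PairwiseDisjoint cell := fun l _ l' _ hne => by
    obtain ⟨a, ha⟩ := Function.ne_iff.1 hne
    exact Set.disjoint_univ_pi.2 ⟨a, Set.pairwise_disjoint_Ico_add_intCast (s a) ha⟩
  calc (S.card : ENNReal) = ∑ l ∈ S, volume (cell l) := by simp [volume_cell]
    _ = volume (⋃ l ∈ S, cell l) :=
        (measure_biUnion_finset cell_disjoint fun l _ =>
          MeasurableSet.univ_pi fun _ => measurableSet_Ico).symm
    _ ≤ volume E := measure_mono (Set.iUnion₂_subset hE)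

lemma norm_sq_toLp_eq_dotProduct (y : ι → ℝ) : ‖WithLp.toLp 2 y‖ ^ 2 = y ⬝ᵥ y :=
  (EuclideanSpace.real_norm_sq_eq _).trans (by simp only [dotProduct, sq])

lemma real_dotProduct_self_nonneg (y : ι → ℝ) : 0 ≤ y ⬝ᵥ y :=
  norm_sq_toLp_eq_dotProduct y ▸ sq_nonneg _

/-- The quadratic form `|y|² + γ (w · y)²`. -/
def ellipticForm (w : ι → ℝ) (γ : ℝ) (y : ι → ℝ) : ℝ := y ⬝ᵥ y + γ * (w ⬝ᵥ y) ^ 2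

/-- The symmetric square root of the matrix `1 + γ w wᵀ` of `ellipticForm w γ`. -/
def ellipticRoot (w : ι → ℝ) (γ : ℝ) : Matrix ι ι ℝ :=
  1 + (γ / (1 + √(1 + γ * (w ⬝ᵥ w)))) • vecMulVec w w

variable (w : ι → ℝ) {γ : ℝ}

lemma one_le_one_add_mul_dotProduct_self (hγ : 0 ≤ γ) : 1 ≤ 1 + γ * (w ⬝ᵥ w) :=
  le_add_of_nonneg_right (mul_nonneg hγ (real_dotProduct_self_nonneg w))

lemma ellipticRoot_coeff_mul (hγ : 0 ≤ γ) :
    γ / (1 + √(1 + γ * (w ⬝ᵥ w))) * (w ⬝ᵥ w) = √(1 + γ * (w ⬝ᵥ w)) - 1 := by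
  have hD := Real.sq_sqrt (zero_le_one.trans (one_le_one_add_mul_dotProduct_self w hγ))
  have hpos : 0 < 1 + √(1 + γ * (w ⬝ᵥ w)) := by positivity
  rw [div_mul_eq_mul_div, div_eq_iff hpos.ne']
  linarith

lemma det_ellipticRoot (hγ : 0 ≤ γ) : (ellipticRoot w γ).det = √(1 + γ * (w ⬝ᵥ w)) := by
  rw [ellipticRoot, vecMulVec_eq Unit, ← smul_mul, ← replicateCol_smul,
    det_one_add_replicateCol_mul_replicateRow, dotProduct_smul, smul_eq_mul,
    ellipticRoot_coeff_mul w hγ]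
  ring

lemma ellipticRoot_mulVec (γ : ℝ) (y : ι → ℝ) :
    ellipticRoot w γ *ᵥ y = y + (γ / (1 + √(1 + γ * (w ⬝ᵥ w))) * (w ⬝ᵥ y)) • w := by
  rw [ellipticRoot, add_mulVec, one_mulVec, smul_mulVec, vecMulVec_mulVec, op_smul_eq_smul,
    smul_smul]

lemma norm_sq_ellipticRoot_mulVec (hγ : 0 ≤ γ) (y : ι → ℝ) :
    ‖WithLp.toLp 2 (ellipticRoot w γ *ᵥ y)‖ ^ 2 = ellipticForm w γ y := by
  set β := γ / (1 + √(1 + γ * (w ⬝ᵥ w))) with hβ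
  have hβw : β * (w ⬝ᵥ w) = √(1 + γ * (w ⬝ᵥ w)) - 1 := ellipticRoot_coeff_mul w hγ
  have hβD : β * (1 + √(1 + γ * (w ⬝ᵥ w))) = γ := div_mul_cancel₀ _ (by positivity)
  rw [norm_sq_toLp_eq_dotProduct, ellipticRoot_mulVec, ← hβ, ellipticForm]
  simp only [add_dotProduct, dotProduct_add, smul_dotProduct, dotProduct_smul, smul_eq_mul,
    dotProduct_comm y w]
  linear_combination (w ⬝ᵥ y) ^ 2 * (β * hβw + hβD)

lemma sqrt_ellipticForm (hγ : 0 ≤ γ) (y : ι → ℝ) :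
    √(ellipticForm w γ y) = ‖WithLp.toLp 2 (ellipticRoot w γ *ᵥ y)‖ := by
  rw [← norm_sq_ellipticRoot_mulVec w hγ, Real.sqrt_sq (norm_nonneg _)]

lemma sqrt_ellipticForm_add_le (hγ : 0 ≤ γ) (x y : ι → ℝ) :
    √(ellipticForm w γ (x + y)) ≤ √(ellipticForm w γ x) + √(ellipticForm w γ y) := by
  simp only [sqrt_ellipticForm w hγ, mulVec_add, WithLp.toLp_add]
  exact norm_add_le _ _

lemma ellipticForm_le (hγ : 0 ≤ γ) (y : ι → ℝ) :
    ellipticForm w γ y ≤ (1 + γ * (w ⬝ᵥ w)) * (y ⬝ᵥ y) := by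
  have cauchy_schwarz : (w ⬝ᵥ y) ^ 2 ≤ (w ⬝ᵥ w) * (y ⬝ᵥ y) := by
    simpa only [dotProduct, sq] using Finset.sum_mul_sq_le_sq_mul_sq Finset.univ w y
  calc ellipticForm w γ y ≤ y ⬝ᵥ y + γ * ((w ⬝ᵥ w) * (y ⬝ᵥ y)) := by
        unfold ellipticForm; gcongr
    _ = _ := by ring

lemma volume_sqrt_ellipticForm_le (hγ : 0 ≤ γ) (r : ℝ) :
    volume {y | √(ellipticForm w γ y) ≤ r} =
      ENNReal.ofReal (√(1 + γ * (w ⬝ᵥ w)))⁻¹ *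
        volume (Metric.closedBall (0 : EuclideanSpace ℝ ι) r) := by
  have hdet : LinearMap.det (toLin' (ellipticRoot w γ)) = √(1 + γ * (w ⬝ᵥ w)) := by
    rw [LinearMap.det_toLin', det_ellipticRoot w hγ]
  have hD : 0 < √(1 + γ * (w ⬝ᵥ w)) :=
    Real.sqrt_pos.2 (one_pos.trans_le (one_le_one_add_mul_dotProduct_self w hγ))
  have hpre : {y | √(ellipticForm w γ y) ≤ r} = toLin' (ellipticRoot w γ) ⁻¹'
      (WithLp.toLp 2 ⁻¹' Metric.closedBall (0 : EuclideanSpace ℝ ι) r) := by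
    ext y
    simp only [Set.mem_ofPred_eq, Set.mem_preimage, mem_closedBall_zero_iff, toLin'_apply,
      sqrt_ellipticForm w hγ]
  rw [hpre, Measure.addHaar_preimage_linearMap _ (by rw [hdet]; exact hD.ne'), hdet,
    abs_of_pos (inv_pos.2 hD), (PiLp.volume_preserving_toLp ι).measure_preimage
      measurableSet_closedBall.nullMeasurableSet]

-- Filling each lattice point to a unit square enlarges the radius `√t` by at most the largest
-- value `√(2 (1 + γ |w|²))` of `√(ellipticForm w γ)` on that square.
lemma card_le_of_ellipticForm_le (w : Fin 2 → ℝ) {γ : ℝ} (hγ : 0 ≤ γ) (s : Fin 2 → ℝ) (t : ℝ)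
    (S : Finset (Fin 2 → ℤ)) (hS : ∀ l ∈ S, ellipticForm w γ (fun a => (l a : ℝ) - s a) ≤ t) :
    (S.card : ℝ) ≤
      Real.pi / √(1 + γ * (w ⬝ᵥ w)) * (√t + √(2 * (1 + γ * (w ⬝ᵥ w)))) ^ 2 := by
  set r := √t + √(2 * (1 + γ * (w ⬝ᵥ w)))
  have cells_subset : ∀ l ∈ S, Set.univ.pi (fun a => Set.Ico (-s a + l a) (-s a + l a + 1)) ⊆
      {y | √(ellipticForm w γ y) ≤ r} := by
    intro l hl y hy
    set z : Fin 2 → ℝ := fun a => y a - (l a - s a) with hz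
    have z_mem (a : Fin 2) : 0 ≤ z a ∧ z a ≤ 1 := by
      have := hy a (Set.mem_univ a)
      simp only [Set.mem_Ico] at this
      constructor <;> simp only [hz] <;> linarith
    have z_short : z ⬝ᵥ z ≤ 2 := by
      rw [dotProduct, Fin.sum_univ_two]
      nlinarith [z_mem 0, z_mem 1]
    have hyz : y = (fun a => (l a : ℝ) - s a) + z := by ext a; simp [hz]
    have hz_form : ellipticForm w γ z ≤ 2 * (1 + γ * (w ⬝ᵥ w)) := by
      rw [mul_comm 2]
      exact (ellipticForm_le w hγ z).trans (mul_le_mul_of_nonneg_left z_short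
        (zero_le_one.trans (one_le_one_add_mul_dotProduct_self w hγ)))
    rw [Set.mem_ofPred_eq, hyz]
    exact (sqrt_ellipticForm_add_le w hγ _ z).trans
      (add_le_add (Real.sqrt_le_sqrt (hS l hl)) (Real.sqrt_le_sqrt hz_form))
  have hcard := card_le_volume_of_unit_cells_subset S (fun a => -s a) _ cells_subset
  rw [volume_sqrt_ellipticForm_le w hγ, EuclideanSpace.volume_closedBall_fin_two,
    ← ENNReal.ofReal_pow (by positivity), ← ENNReal.ofReal_mul (by positivity),
    ← ENNReal.ofReal_mul (by positivity)] at hcard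
  rw [← ENNReal.ofReal_natCast, ENNReal.ofReal_le_ofReal_iff (by positivity)] at hcard
  calc (S.card : ℝ) ≤ _ := hcard
    _ = _ := by ring

end LatticePointsInEllipses

section EffectiveDiffusivity

variable {c ε x y : ℝ}

lemma one_add_mul_Gfun (hc : c ≠ 0) (x : ℝ) :
    1 + c * Gfun c x = (3 * c * x / (2 * Real.pi) + 1) ^ ((2 : ℝ) / 3) := by
  rw [Gfun, mul_inv_cancel_left₀ hc, add_sub_cancel]

lemma Gfun_nonneg (hc : 0 ≤ c) (hx : 0 ≤ x) : 0 ≤ Gfun c x := by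
  have base_ge_one : 1 ≤ 3 * c * x / (2 * Real.pi) + 1 :=
    le_add_of_nonneg_left (by positivity)
  exact mul_nonneg (inv_nonneg.2 hc)
    (sub_nonneg.2 (Real.one_le_rpow base_ge_one (by norm_num)))

lemma Gfun_le_Gfun (hc : 0 ≤ c) (hx : 0 ≤ x) (hxy : x ≤ y) : Gfun c x ≤ Gfun c y := by
  unfold Gfun
  gcongr

lemma one_le_sqrt_one_add_mul_Gfun (hc : 0 ≤ c) (hx : 0 ≤ x) : 1 ≤ √(1 + c * Gfun c x) :=
  Real.one_le_sqrt.2 (le_add_of_nonneg_right (mul_nonneg hc (Gfun_nonneg hc hx)))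

lemma hasDerivAt_Gfun (hc : 0 < c) (hx : 0 ≤ x) :
    HasDerivAt (Gfun c) (1 / (Real.pi * √(1 + c * Gfun c x))) x := by
  set A := 3 * c * x / (2 * Real.pi) + 1 with hA
  have hA0 : 0 < A := by positivity
  have hlin : HasDerivAt (fun x : ℝ => 3 * c * x / (2 * Real.pi) + 1)
      (3 * c / (2 * Real.pi)) x := by
    simpa using (((hasDerivAt_id x).const_mul (3 * c)).div_const (2 * Real.pi)).add_const 1
  have hpow := (hlin.rpow_const (p := (2 : ℝ) / 3) (Or.inl hA0.ne')).sub_const 1 |>.const_mul c⁻¹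
  have hsqrt : √(1 + c * Gfun c x) = A ^ ((1 : ℝ) / 3) := by
    rw [one_add_mul_Gfun hc.ne', Real.sqrt_eq_rpow, ← Real.rpow_mul hA0.le]
    norm_num
  refine HasDerivAt.congr_deriv (f := Gfun c) hpow ?_
  rw [hsqrt, ← hA, show (2 : ℝ) / 3 - 1 = -(1 / 3) by norm_num, Real.rpow_neg hA0.le]
  field_simp

lemma Gfun_le_add (hc : 0 < c) (hx : 0 ≤ x) (hxy : x ≤ y) :
    Gfun c y ≤ Gfun c x + (y - x) := by
  have hderiv (z : ℝ) (hz : z ∈ Set.Ici (0 : ℝ)) := hasDerivAt_Gfun hc hz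
  have deriv_le_one : ∀ z ∈ interior (Set.Ici (0 : ℝ)), deriv (Gfun c) z ≤ 1 := fun z hz => by
    have hz' : 0 ≤ z := interior_subset hz
    rw [(hderiv z hz').deriv]
    have := Real.pi_gt_three
    have := one_le_sqrt_one_add_mul_Gfun hc.le hz'
    exact div_le_one_of_le₀ (by nlinarith) (by positivity)
  have := (convex_Ici (0 : ℝ)).image_sub_le_mul_sub_of_deriv_le
    (fun z hz => (hderiv z hz).continuousAt.continuousWithinAt)
    (fun z hz => (hderiv z (interior_subset hz)).differentiableAt.differentiableWithinAt)
    deriv_le_one x hx y (hx.trans hxy) hxy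
  linarith

lemma lam_two_sq (hε : 0 < ε) (hε1 : ε < 1) : lam 2 ε ^ 2 = (Real.log (1 / ε ^ 2))⁻¹ := by
  have hlog : 0 ≤ Real.log (1 / ε ^ 2) :=
    Real.log_nonneg ((one_le_div (by positivity)).2 (pow_le_one₀ hε.le hε1.le))
  rw [lam, if_pos rfl, inv_pow, Real.sq_sqrt hlog]

lemma lam_two_sq_pos (hε : 0 < ε) (hε1 : ε < 1) : 0 < lam 2 ε ^ 2 := by
  rw [lam_two_sq hε hε1]
  exact inv_pos.2 (Real.log_pos ((one_lt_div (by positivity)).2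
    (pow_lt_one₀ hε.le hε1 two_ne_zero)))

lemma Leps_nonneg (hx : 0 ≤ x) : 0 ≤ Leps ε x :=
  mul_nonneg (sq_nonneg _) (Real.log_nonneg (le_add_of_nonneg_right (by positivity)))

lemma Leps_anti (hε : 0 < ε) (hx : 0 < x) (hxy : x ≤ y) : Leps ε y ≤ Leps ε x := by
  have hy : 0 < y := hx.trans_le hxy
  unfold Leps
  gcongr

lemma Leps_le_add_log_two (hε : 0 < ε) (hx : 0 < x) (hy : 0 < y) (hyx : y ≤ 2 * x) :
    Leps ε x ≤ Leps ε y + lam 2 ε ^ 2 * Real.log 2 := by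
  have hinv : 1 / (ε ^ 2 * x) ≤ 1 / (ε ^ 2 * y) * 2 := by
    rw [div_mul_eq_mul_div, div_le_div_iff₀ (by positivity) (by positivity)]
    linarith [mul_le_mul_of_nonneg_left hyx (sq_nonneg ε)]
  unfold Leps
  rw [← mul_add, ← Real.log_mul (by positivity) (by norm_num)]
  gcongr
  linarith

lemma Leps_le_three (hε : 0 < ε) (hε3 : ε < 1 / 3) (hx : 1 / 4 ≤ x) : Leps ε x ≤ 3 := by
  set z := 1 / ε ^ 2 with hz
  have hz9 : 9 ≤ z := by
    rw [hz, le_div_iff₀ (by positivity)]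
    nlinarith
  have hinv : 1 / (ε ^ 2 * x) ≤ 4 * z := by
    rw [hz, mul_one_div, div_le_div_iff₀ (by positivity) (by positivity)]
    nlinarith [sq_nonneg ε]
  have hcube : 1 + 4 * z ≤ z ^ 3 := by
    nlinarith [mul_nonneg (by linarith : 0 ≤ z) (by linarith : 0 ≤ z - 9)]
  rw [Leps, lam_two_sq hε (by linarith), inv_mul_le_iff₀ (Real.log_pos (by linarith))]
  calc Real.log (1 + 1 / (ε ^ 2 * x)) ≤ Real.log (z ^ 3) :=
        Real.log_le_log (by positivity) (by linarith)
    _ = Real.log z * 3 := by rw [Real.log_pow]; push_cast; ring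

lemma hasDerivAt_Leps (hε : 0 < ε) (hx : 0 < x) :
    HasDerivAt (Leps ε) (-(lam 2 ε ^ 2 / (x * (1 + ε ^ 2 * x)))) x := by
  have hinner : HasDerivAt (fun x : ℝ => 1 + 1 / (ε ^ 2 * x)) (-(ε ^ 2) / (ε ^ 2 * x) ^ 2) x := by
    have := (((hasDerivAt_id x).const_mul (ε ^ 2)).inv (by simp [hε.ne', hx.ne'])).const_add 1
    simpa [one_div] using this
  have hlog := (hinner.log (by positivity)).const_mul (lam 2 ε ^ 2)
  refine HasDerivAt.congr_deriv (f := Leps ε) hlog ?_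
  field_simp
  ring

/-- The diffusivity `G(L^ε(x))` seen at energy level `x`, with `c = |w|²`. -/
def Geps (c ε x : ℝ) : ℝ := Gfun c (Leps ε x)

lemma Geps_nonneg (hc : 0 ≤ c) (hx : 0 ≤ x) : 0 ≤ Geps c ε x :=
  Gfun_nonneg hc (Leps_nonneg hx)

lemma Geps_anti (hc : 0 ≤ c) (hε : 0 < ε) (hx : 0 < x) (hxy : x ≤ y) :
    Geps c ε y ≤ Geps c ε x :=
  Gfun_le_Gfun hc (Leps_nonneg (hx.le.trans hxy)) (Leps_anti hε hx hxy)

lemma Geps_le_Gfun_three (hc : 0 ≤ c) (hε : 0 < ε) (hε3 : ε < 1 / 3) (hx : 1 / 4 ≤ x) :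
    Geps c ε x ≤ Gfun c 3 :=
  Gfun_le_Gfun hc (Leps_nonneg (by linarith)) (Leps_le_three hε hε3 hx)

lemma Geps_le_add_log_two (hc : 0 < c) (hε : 0 < ε) (hx : 0 < x) (hy : 0 < y)
    (hyx : y ≤ 2 * x) : Geps c ε x ≤ Geps c ε y + lam 2 ε ^ 2 * Real.log 2 := by
  have hlog : 0 ≤ lam 2 ε ^ 2 * Real.log 2 := by positivity
  have hL := Leps_nonneg (ε := ε) hy.le
  calc Geps c ε x ≤ Gfun c (Leps ε y + lam 2 ε ^ 2 * Real.log 2) :=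
        Gfun_le_Gfun hc.le (Leps_nonneg hx.le) (Leps_le_add_log_two hε hx hy hyx)
    _ ≤ Geps c ε y + lam 2 ε ^ 2 * Real.log 2 :=
        (Gfun_le_add hc hL (le_add_of_nonneg_right hlog)).trans_eq (by rw [Geps]; ring)

lemma hasDerivAt_Geps (hc : 0 < c) (hε : 0 < ε) (hx : 0 < x) :
    HasDerivAt (Geps c ε)
      (-(lam 2 ε ^ 2 / (Real.pi * √(1 + c * Geps c ε x) * (x * (1 + ε ^ 2 * x))))) x := by
  refine HasDerivAt.congr_deriv (f := Geps c ε)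
    ((hasDerivAt_Gfun hc (Leps_nonneg hx.le)).comp x (hasDerivAt_Leps hε hx)) ?_
  rw [Geps, mul_neg, div_mul_div_comm, one_mul]

end EffectiveDiffusivity

section LayerCake

open MeasureTheory

lemma intervalIntegrable_indicator_Ioi_inv_sq {a b : ℝ} (ha : 0 < a) (hab : a ≤ b) (h : ℝ) :
    IntervalIntegrable ((Set.Ioi h).indicator fun t => (t ^ 2)⁻¹) volume a b := by
  have hcont : ContinuousOn (fun t : ℝ => (t ^ 2)⁻¹) (Set.Icc a b) :=
    (continuousOn_id.pow 2).inv₀ fun t ht => (pow_pos (ha.trans_le ht.1) 2).ne'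
  rw [intervalIntegrable_iff_integrableOn_Icc_of_le hab]
  exact hcont.integrableOn_Icc.indicator measurableSet_Ioi

lemma integral_indicator_Ioi_inv_sq {a b h : ℝ} (ha : 0 < a) (hah : a ≤ h) (hhb : h ≤ b) :
    ∫ t in a..b, (Set.Ioi h).indicator (fun t => (t ^ 2)⁻¹) t = h⁻¹ - b⁻¹ := by
  have hset : Set.Ioc a b ∩ Set.Ioi h = Set.Ioc h b := by
    rw [Set.Ioc_inter_Ioi, sup_of_le_right hah]
  rw [intervalIntegral.integral_of_le (hah.trans hhb), setIntegral_indicator measurableSet_Ioi,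
    hset, ← intervalIntegral.integral_of_le hhb]
  have pos_of_mem {t : ℝ} (ht : t ∈ Set.uIcc h b) : 0 < t :=
    (ha.trans_le hah).trans_le (Set.uIcc_of_le hhb ▸ ht).1
  rw [intervalIntegral.integral_eq_sub_of_hasDerivAt (f := fun t : ℝ => -t⁻¹)
    (fun t ht => by simpa using (hasDerivAt_inv (pos_of_mem ht).ne').fun_neg)]
  · ring
  · exact ((continuousOn_id.pow 2).inv₀
      fun t ht => (pow_pos (pos_of_mem ht) 2).ne').intervalIntegrable

lemma sum_inv_le_of_card_sublevel_le {ι : Type*} (S : Finset ι) (H : ι → ℝ) {α T : ℝ}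
    (hα : 0 < α) (hαT : α ≤ T) (hH : ∀ l ∈ S, H l ∈ Set.Icc α T) {F F' : ℝ → ℝ}
    (hF : ∀ t, α ≤ t → HasDerivAt F (F' t) t)
    (hcard : ∀ t, α ≤ t → ((S.filter (H · ≤ t)).card : ℝ) / t ^ 2 ≤ F' t) :
    ∑ l ∈ S, (H l)⁻¹ ≤ S.card / T + (F T - F α) := by
  let φ (l : ι) : ℝ → ℝ := (Set.Ioi (H l)).indicator fun t => (t ^ 2)⁻¹
  have hφ (l : ι) : IntervalIntegrable (φ l) volume α T :=
    intervalIntegrable_indicator_Ioi_inv_sq hα hαT (H l)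
  have sum_φ_le (t : ℝ) (ht : α ≤ t) : ∑ l ∈ S, φ l t ≤ F' t := by
    refine le_trans ?_ (hcard t ht)
    rw [div_eq_mul_inv, ← nsmul_eq_mul, ← Finset.sum_const, Finset.sum_filter]
    refine Finset.sum_le_sum fun l _ => ?_
    exact (Set.indicator_le_indicator_of_subset Set.Ioi_subset_Ici_self
      (fun t => by positivity) t).trans_eq (Set.indicator_apply _ _ _)
  have integral_le : ∫ t in α..T, ∑ l ∈ S, φ l t ≤ F T - F α :=
    intervalIntegral.integral_le_sub_of_hasDeriv_right_of_le hαT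
      (fun t ht => (hF t ht.1).continuousAt.continuousWithinAt)
      (fun t ht => (hF t ht.1.le).hasDerivWithinAt)
      (integrable_finsetSum _ fun l _ =>
        (intervalIntegrable_iff_integrableOn_Icc_of_le hαT).1 (hφ l))
      (fun t ht => sum_φ_le t ht.1.le)
  have integral_eq : ∫ t in α..T, ∑ l ∈ S, φ l t = ∑ l ∈ S, (H l)⁻¹ - S.card / T := by
    rw [intervalIntegral.integral_finsetSum fun l _ => hφ l,
      Finset.sum_congr rfl fun l hl => integral_indicator_Ioi_inv_sq hα (hH l hl).1 (hH l hl).2,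
      Finset.sum_sub_distrib, Finset.sum_const, nsmul_eq_mul, ← div_eq_mul_inv]
  linarith

end LayerCake

section ResolventSum

open Matrix

variable {c ε : ℝ}

/-- A primitive of `π / (t √(1 + c G(L^ε(t)))) + B t^{-3/2}`, up to the replacement of `1 / t` by
`1 / (t (1 + ε² t))`, which makes the first term an exact derivative of `G ∘ L^ε`. -/
def layerPrimitive (c ε B t : ℝ) : ℝ :=
  -(Real.pi ^ 2 / lam 2 ε ^ 2 * Geps c ε t) + Real.pi * Real.log (1 + ε ^ 2 * t) - 2 * B * (√t)⁻¹

lemma hasDerivAt_layerPrimitive (hc : 0 < c) (hε : 0 < ε) (hε1 : ε < 1) (B : ℝ) {t : ℝ}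
    (ht : 0 < t) :
    HasDerivAt (layerPrimitive c ε B)
      (Real.pi / (√(1 + c * Geps c ε t) * (t * (1 + ε ^ 2 * t))) +
        Real.pi * (ε ^ 2 / (1 + ε ^ 2 * t)) + B / (t * √t)) t := by
  have hlam : lam 2 ε ≠ 0 := sq_pos_iff.1 (lam_two_sq_pos hε hε1)
  have hD : 0 < √(1 + c * Geps c ε t) :=
    one_pos.trans_le (one_le_sqrt_one_add_mul_Gfun hc.le (Leps_nonneg ht.le))
  have hst : 0 < √t := Real.sqrt_pos.2 ht
  have hlog : HasDerivAt (fun t => Real.log (1 + ε ^ 2 * t)) (ε ^ 2 / (1 + ε ^ 2 * t)) t := by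
    simpa using (((hasDerivAt_id t).const_mul (ε ^ 2)).const_add 1).log
      (by simp only [id]; positivity)
  have hsqrt := ((Real.hasDerivAt_sqrt ht.ne').inv hst.ne').const_mul (2 * B)
  have hF := (((hasDerivAt_Geps hc hε ht).const_mul (Real.pi ^ 2 / lam 2 ε ^ 2)).fun_neg.fun_add
    (hlog.const_mul Real.pi)).fun_sub hsqrt
  refine HasDerivAt.congr_deriv (f := layerPrimitive c ε B) hF ?_
  rw [Real.sq_sqrt ht.le]
  field_simp
  ring

lemma card_div_sq_le_deriv_layerPrimitive (hc : 0 < c) {B t : ℝ} (ht : 0 < t) {N : ℝ}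
    (hN : N ≤ Real.pi * t / √(1 + c * Geps c ε t) + B * √t) :
    N / t ^ 2 ≤ Real.pi / (√(1 + c * Geps c ε t) * (t * (1 + ε ^ 2 * t))) +
      Real.pi * (ε ^ 2 / (1 + ε ^ 2 * t)) + B / (t * √t) := by
  set D := √(1 + c * Geps c ε t)
  have hD : 1 ≤ D := one_le_sqrt_one_add_mul_Gfun hc.le (Leps_nonneg ht.le)
  have : 0 < √t := Real.sqrt_pos.2 ht
  have hst2 : √t ^ 2 = t := Real.sq_sqrt ht.le
  have partial_fraction : Real.pi / (D * t) =
      Real.pi / (D * (t * (1 + ε ^ 2 * t))) + Real.pi * (ε ^ 2 / (1 + ε ^ 2 * t)) / D := by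
    field_simp
  have div_D_le : Real.pi * (ε ^ 2 / (1 + ε ^ 2 * t)) / D ≤ Real.pi * (ε ^ 2 / (1 + ε ^ 2 * t)) :=
    div_le_self (by positivity) hD
  calc N / t ^ 2 ≤ (Real.pi * t / D + B * √t) / t ^ 2 := by gcongr
    _ = Real.pi / (D * t) + B / (t * √t) := by
        rw [add_div]
        congr 1
        · field_simp
        · rw [div_eq_div_iff (by positivity) (by positivity)]
          linear_combination B * t * hst2
    _ ≤ _ := by linarith

lemma sum_inv_le_of_card_sublevel_le_ellipse {ι : Type*} (S : Finset ι) (H : ι → ℝ) (hc : 0 < c)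
    (hε : 0 < ε) (hε1 : ε < 1) {α T B : ℝ} (hα : 1 / 4 ≤ α) (hαT : α ≤ T) (hB : 0 ≤ B)
    (hH : ∀ l ∈ S, H l ∈ Set.Icc α T)
    (hcard : ∀ t, α ≤ t → ((S.filter (H · ≤ t)).card : ℝ) ≤
      Real.pi * t / √(1 + c * Geps c ε t) + B * √t) :
    ∑ l ∈ S, (H l)⁻¹ ≤ Real.pi ^ 2 / lam 2 ε ^ 2 * Geps c ε α +
      Real.pi * Real.log ((1 + ε ^ 2 * T) / (1 + ε ^ 2 * α)) + Real.pi + 6 * B := by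
  have hα0 : 0 < α := by linarith
  have hT0 : 0 < T := hα0.trans_le hαT
  have layer_cake := sum_inv_le_of_card_sublevel_le S H hα0 hαT hH
    (fun t ht => hasDerivAt_layerPrimitive hc hε hε1 B (hα0.trans_le ht))
    (fun t ht => card_div_sq_le_deriv_layerPrimitive hc (hα0.trans_le ht) (hcard t ht))
  have inv_sqrt_le {t : ℝ} (ht : 1 / 4 ≤ t) : (√t)⁻¹ ≤ 2 :=
    inv_le_of_inv_le₀ two_pos (Real.le_sqrt_of_sq_le (by norm_num; linarith))
  have card_div_le : (S.card : ℝ) / T ≤ Real.pi + 2 * B := by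
    have hST : S.filter (H · ≤ T) = S := Finset.filter_true_of_mem fun l hl => (hH l hl).2
    have hcardT := hcard T hαT
    rw [hST] at hcardT
    have hD := one_le_sqrt_one_add_mul_Gfun hc.le (Leps_nonneg (ε := ε) hT0.le)
    calc (S.card : ℝ) / T ≤ (Real.pi * T + B * √T) / T := by
          gcongr
          exact hcardT.trans (add_le_add_left (div_le_self (by positivity) hD) _)
      _ = Real.pi + B * (√T)⁻¹ := by
          rw [add_div, mul_div_cancel_right₀ _ hT0.ne', mul_div_assoc, Real.sqrt_div_self]
      _ ≤ Real.pi + 2 * B := by nlinarith [inv_sqrt_le (hα.trans hαT)]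
  have hGT : 0 ≤ Real.pi ^ 2 / lam 2 ε ^ 2 * Geps c ε T :=
    mul_nonneg (by positivity) (Geps_nonneg hc.le hT0.le)
  have hsT : 0 ≤ B * (√T)⁻¹ := by positivity
  have hsα : B * (√α)⁻¹ ≤ B * 2 := mul_le_mul_of_nonneg_left (inv_sqrt_le hα) hB
  rw [Real.log_div (by positivity) (by positivity)]
  unfold layerPrimitive at layer_cake
  linarith

section

variable {ι : Type*} [Fintype ι]

/-- The value at `y` of the quadratic form `|y|² + α + (w · y)² G(L^ε(|y|² + α))` which the
resolvent `S^ε` inverts, as a function of the relative momentum `y` of the two merging modes; `α`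
collects the energy of everything else. -/
def resolventEnergy (w : ι → ℝ) (ε α : ℝ) (y : ι → ℝ) : ℝ :=
  y ⬝ᵥ y + α + (w ⬝ᵥ y) ^ 2 * Geps (w ⬝ᵥ w) ε (y ⬝ᵥ y + α)

variable (w : ι → ℝ) {α : ℝ}

lemma dotProduct_self_add_le_resolventEnergy (hα : 0 ≤ α) (y : ι → ℝ) :
    y ⬝ᵥ y + α ≤ resolventEnergy w ε α y :=
  le_add_of_nonneg_right (mul_nonneg (sq_nonneg _)
    (Geps_nonneg (real_dotProduct_self_nonneg w) (add_nonneg (real_dotProduct_self_nonneg y) hα)))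

lemma resolventEnergy_le (hε : 0 < ε) (hε3 : ε < 1 / 3) (hα : 1 / 4 ≤ α) (y : ι → ℝ) :
    resolventEnergy w ε α y ≤ (1 + (w ⬝ᵥ w) * Gfun (w ⬝ᵥ w) 3) * (y ⬝ᵥ y + α) := by
  have hw := real_dotProduct_self_nonneg w
  have hy := real_dotProduct_self_nonneg y
  have hγ : 0 ≤ Gfun (w ⬝ᵥ w) 3 := Gfun_nonneg hw zero_le_three
  have form_le := ellipticForm_le w hγ y
  calc resolventEnergy w ε α y ≤ ellipticForm w (Gfun (w ⬝ᵥ w) 3) y + α := by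
        have := mul_le_mul_of_nonneg_left
          (Geps_le_Gfun_three hw hε hε3 (hα.trans (le_add_of_nonneg_left hy)))
          (sq_nonneg (w ⬝ᵥ y))
        unfold resolventEnergy ellipticForm
        linarith
    _ ≤ _ := by nlinarith [mul_nonneg hw hγ]

lemma ellipticForm_le_of_resolventEnergy_le (hε : 0 < ε) (hα : 0 < α) {t : ℝ} {y : ι → ℝ}
    (hy : resolventEnergy w ε α y ≤ t) : ellipticForm w (Geps (w ⬝ᵥ w) ε t) y ≤ t := by
  have hyα : y ⬝ᵥ y + α ≤ t := (dotProduct_self_add_le_resolventEnergy w hα.le y).trans hy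
  have hG : Geps (w ⬝ᵥ w) ε t ≤ Geps (w ⬝ᵥ w) ε (y ⬝ᵥ y + α) :=
    Geps_anti (real_dotProduct_self_nonneg w) hε
      (add_pos_of_nonneg_of_pos (real_dotProduct_self_nonneg y) hα) hyα
  unfold resolventEnergy at hy
  unfold ellipticForm
  nlinarith [mul_le_mul_of_nonneg_left hG (sq_nonneg (w ⬝ᵥ y))]

end

lemma card_resolvent_sublevel_le (w : Fin 2 → ℝ) (hε : 0 < ε) (hε3 : ε < 1 / 3)
    (s : Fin 2 → ℝ) {α t : ℝ} (hα : 1 / 4 ≤ α) (hαt : α ≤ t) (S : Finset (Fin 2 → ℤ))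
    (hS : ∀ l ∈ S, resolventEnergy w ε α (fun a => (l a : ℝ) - s a) ≤ t) :
    (S.card : ℝ) ≤ Real.pi * t / √(1 + (w ⬝ᵥ w) * Geps (w ⬝ᵥ w) ε t) +
      Real.pi * (2 * √2 + 4 * √(1 + (w ⬝ᵥ w) * Gfun (w ⬝ᵥ w) 3)) * √t := by
  have hc := real_dotProduct_self_nonneg w
  set c := w ⬝ᵥ w
  set D := √(1 + c * Geps c ε t) with hD
  have ht : 1 / 4 ≤ t := hα.trans hαt
  have hD1 : 1 ≤ D := one_le_sqrt_one_add_mul_Gfun hc (Leps_nonneg (by linarith))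
  have hDm : D ≤ √(1 + c * Gfun c 3) := by
    rw [hD]
    gcongr
    exact Geps_le_Gfun_three hc hε hε3 ht
  have hst : 1 ≤ 2 * √t := by
    have : (1 / 2 : ℝ) ≤ √t := Real.le_sqrt_of_sq_le (by norm_num; linarith)
    linarith
  calc (S.card : ℝ) ≤ Real.pi / D * (√t + √2 * D) ^ 2 := by
        have := card_le_of_ellipticForm_le w (Geps_nonneg hc (by linarith : 0 ≤ t)) s t S
          fun l hl => ellipticForm_le_of_resolventEnergy_le w hε (by linarith) (hS l hl)
        rwa [mul_comm _ (w ⬝ᵥ w), Real.sqrt_mul zero_le_two] at this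
    _ = Real.pi * t / D + Real.pi * (2 * √2 * √t + 2 * D) := by
        have h2 : √2 ^ 2 = (2 : ℝ) := Real.sq_sqrt zero_le_two
        have ht2 : √t ^ 2 = t := Real.sq_sqrt (by linarith)
        field_simp
        linear_combination ht2 + D ^ 2 * h2
    _ ≤ Real.pi * t / D + Real.pi * (2 * √2 * √t + 2 * (2 * √t * √(1 + c * Gfun c 3))) := by
        gcongr
        nlinarith
    _ = _ := by ring

lemma exists_sum_inv_resolventEnergy_le (w : Fin 2 → ℝ) (hw : 0 < w ⬝ᵥ w) :
    ∃ K, ∀ ε : ℝ, 0 < ε → ε < 1 / 3 → ∀ (s : Fin 2 → ℝ) (α : ℝ), 1 / 4 ≤ α →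
      ∀ S : Finset (Fin 2 → ℤ),
      (∀ l ∈ S, ((fun a => (l a : ℝ) - s a) ⬝ᵥ fun a => (l a : ℝ) - s a) ≤ 1 / ε ^ 2) →
      lam 2 ε ^ 2 / Real.pi ^ 2 * ∑ l ∈ S, (resolventEnergy w ε α fun a => (l a : ℝ) - s a)⁻¹ ≤
        Geps (w ⬝ᵥ w) ε α + K * lam 2 ε ^ 2 := by
  set c := w ⬝ᵥ w
  have hγm : 0 ≤ c * Gfun c 3 := mul_nonneg hw.le (Gfun_nonneg hw.le zero_le_three)
  set γm := Gfun c 3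
  set B := Real.pi * (2 * √2 + 4 * √(1 + c * γm))
  refine ⟨(Real.pi * Real.log (2 + c * γm) + Real.pi + 6 * B) / Real.pi ^ 2, ?_⟩
  intro ε hε hε3 s α hα S hS
  have hlam : lam 2 ε ≠ 0 := sq_pos_iff.1 (lam_two_sq_pos hε (by linarith))
  set T := (1 + c * γm) * (1 / ε ^ 2 + α) with hT
  have hαT : α ≤ T := by
    have : 0 ≤ 1 / ε ^ 2 := by positivity
    nlinarith
  have energy_mem : ∀ l ∈ S, resolventEnergy w ε α (fun a => (l a : ℝ) - s a) ∈ Set.Icc α T := by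
    intro l hl
    refine ⟨(le_add_of_nonneg_left (real_dotProduct_self_nonneg _)).trans
      (dotProduct_self_add_le_resolventEnergy w (by linarith) _),
      (resolventEnergy_le w hε hε3 hα _).trans ?_⟩
    exact mul_le_mul_of_nonneg_left (add_le_add_left (hS l hl) α) (by linarith)
  have sum_le := sum_inv_le_of_card_sublevel_le_ellipse S _ hw hε (by linarith) hα hαT
    (by positivity : 0 ≤ B) energy_mem fun t ht => card_resolvent_sublevel_le w hε hε3 s hα ht _
      fun l hl => (Finset.mem_filter.1 hl).2
  have ratio_le : (1 + ε ^ 2 * T) / (1 + ε ^ 2 * α) ≤ 2 + c * γm := by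
    have hεT : ε ^ 2 * T = (1 + c * γm) * (1 + ε ^ 2 * α) := by rw [hT]; field_simp
    rw [div_le_iff₀ (by positivity), hεT]
    nlinarith [mul_nonneg (sq_nonneg ε) (by linarith : 0 ≤ α)]
  have log_le : Real.log ((1 + ε ^ 2 * T) / (1 + ε ^ 2 * α)) ≤ Real.log (2 + c * γm) :=
    Real.log_le_log (by positivity) ratio_le
  calc _ ≤ lam 2 ε ^ 2 / Real.pi ^ 2 * (Real.pi ^ 2 / lam 2 ε ^ 2 * Geps c ε α +
        Real.pi * Real.log (2 + c * γm) + Real.pi + 6 * B) := by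
        gcongr
        exact sum_le.trans (by gcongr)
    _ = _ := by field_simp; ring

end ResolventSum

section Lattice

open Matrix

variable {d : ℕ}

lemma nsq_nonneg (k : ZLat d) : 0 ≤ nsq k := Finset.sum_nonneg fun _ _ => sq_nonneg _

lemma eN_sq (k : ZLat d) : eN k ^ 2 = nsq k := Real.sq_sqrt (nsq_nonneg k)

lemma eN_nonneg (k : ZLat d) : 0 ≤ eN k := Real.sqrt_nonneg _

lemma eN_zero : eN (0 : ZLat d) = 0 := by simp [eN, nsq]

lemma one_le_nsq {k : ZLat d} (hk : k ≠ 0) : 1 ≤ nsq k := by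
  obtain ⟨a, ha⟩ := Function.ne_iff.1 hk
  calc (1 : ℝ) ≤ (k a : ℝ) ^ 2 := by
        exact_mod_cast (one_le_sq_iff_one_le_abs _).2 (Int.one_le_abs ha)
    _ ≤ nsq k := Finset.single_le_sum (f := fun i => (k i : ℝ) ^ 2) (fun _ _ => sq_nonneg _)
        (Finset.mem_univ a)

lemma one_le_eN {k : ZLat d} (hk : k ≠ 0) : 1 ≤ eN k := Real.one_le_sqrt.2 (one_le_nsq hk)

lemma wnSq_eq_dotProduct (w : Fin d → ℝ) : wnSq w = w ⬝ᵥ w := by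
  simp only [wnSq, dotProduct, sq]

lemma wnSq_pos {w : Fin d → ℝ} (hw : w ≠ 0) : 0 < wnSq w := by
  rw [wnSq_eq_dotProduct]
  exact (real_dotProduct_self_nonneg w).lt_of_ne' (mt dotProduct_self_eq_zero.1 hw)

lemma dotw_sq_le (w : Fin d → ℝ) (k : ZLat d) : dotw w k ^ 2 ≤ wnSq w * nsq k :=
  Finset.sum_mul_sq_le_sq_mul_sq Finset.univ w fun i => (k i : ℝ)

end Lattice

section ShellSums

/-- The supremum norm on `ℤ²`, as a natural number; it indexes the square shells of `Int.box`. -/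
def supAbs (l : ZLat 2) : ℕ := max (l 0).natAbs (l 1).natAbs

lemma supAbs_pos {l : ZLat 2} (hl : l ≠ 0) : 0 < supAbs l := by
  contrapose! hl
  rw [supAbs, Nat.le_zero, Nat.max_eq_zero_iff, Int.natAbs_eq_zero, Int.natAbs_eq_zero] at hl
  ext a
  fin_cases a
  · exact hl.1
  · exact hl.2

lemma supAbs_le_eN (l : ZLat 2) : (supAbs l : ℝ) ≤ eN l := by
  have natAbs_le (a : Fin 2) : ((l a).natAbs : ℝ) ≤ eN l := by
    refine Real.le_sqrt_of_sq_le ?_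
    rw [Nat.cast_natAbs, Int.cast_abs, sq_abs]
    exact Finset.single_le_sum (f := fun i => (l i : ℝ) ^ 2) (fun _ _ => sq_nonneg _)
      (Finset.mem_univ a)
  rw [supAbs, Nat.cast_max]
  exact max_le (natAbs_le 0) (natAbs_le 1)

lemma card_filter_supAbs_eq_le (S : Finset (ZLat 2)) {n : ℕ} (hn : n ≠ 0) :
    (S.filter (supAbs · = n)).card ≤ 8 * n := by
  rw [← Int.card_box hn]
  refine Finset.card_le_card_of_injOn (fun l => (l 0, l 1)) (fun l hl => ?_) fun l _ l' _ h => ?_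
  · exact Int.mem_box.2 (Finset.mem_filter.1 hl).2
  · ext a
    fin_cases a
    · exact (Prod.ext_iff.1 h).1
    · exact (Prod.ext_iff.1 h).2

lemma sum_le_of_le_supAbs {S : Finset (ZLat 2)} (hS : ∀ l ∈ S, l ≠ 0) {g : ZLat 2 → ℝ} {φ : ℕ → ℝ}
    (hg : ∀ l ∈ S, g l ≤ φ (supAbs l)) (hφ : ∀ n, 0 ≤ φ n) {C : ℝ}
    (hC : ∀ M, ∑ n ∈ Finset.range M, 8 * ((n : ℝ) + 1) * φ (n + 1) ≤ C) :
    ∑ l ∈ S, g l ≤ C := by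
  have shell_lt : ∀ l ∈ S, supAbs l - 1 ∈ Finset.range (S.sup supAbs) := fun l hl => by
    have := supAbs_pos (hS l hl)
    have : supAbs l ≤ S.sup supAbs := Finset.le_sup hl
    exact Finset.mem_range.2 (by omega)
  refine le_trans ?_ (hC (S.sup supAbs))
  rw [← Finset.sum_fiberwise_of_maps_to shell_lt]
  refine Finset.sum_le_sum fun n _ => ?_
  have shell_eq : S.filter (supAbs · - 1 = n) = S.filter (supAbs · = n + 1) :=
    Finset.filter_congr fun l hl => by have := supAbs_pos (hS l hl); omega
  rw [shell_eq]
  calc ∑ l ∈ S.filter (supAbs · = n + 1), g l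
      ≤ ∑ l ∈ S.filter (supAbs · = n + 1), φ (n + 1) := Finset.sum_le_sum fun l hl => by
        obtain ⟨hlS, hln⟩ := Finset.mem_filter.1 hl
        exact hln ▸ hg l hlS
    _ = (S.filter (supAbs · = n + 1)).card * φ (n + 1) := by rw [Finset.sum_const, nsmul_eq_mul]
    _ ≤ 8 * ((n : ℝ) + 1) * φ (n + 1) := by
        gcongr
        · exact hφ _
        · exact_mod_cast card_filter_supAbs_eq_le S n.succ_ne_zero

lemma sum_range_div_sq_add_sq_le {b : ℝ} (hb : 0 < b) (M : ℕ) :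
    ∑ n ∈ Finset.range M, b / (((n : ℝ) + 1) ^ 2 + b ^ 2) ≤ 2 := by
  have telescoping : ∑ n ∈ Finset.range M, b / (((n : ℝ) + 1) ^ 2 + b ^ 2) ≤
      2 * b * (1 / b - 1 / (M + b)) := by
    induction M with
    | zero => simp
    | succ M ih =>
      have hM : (0 : ℝ) ≤ M := Nat.cast_nonneg M
      have term_le : b / (((M : ℝ) + 1) ^ 2 + b ^ 2) ≤
          2 * b * (1 / (M + b) - 1 / (M + 1 + b)) := by
        rw [div_sub_div _ _ (by positivity) (by positivity), mul_div_assoc',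
          div_le_div_iff₀ (by positivity) (by positivity)]
        nlinarith [mul_nonneg hb.le (sq_nonneg ((M : ℝ) + 1 - b)), mul_nonneg hb.le hM]
      rw [Finset.sum_range_succ]
      push_cast
      linarith
  have : 0 ≤ b * (1 / ((M : ℝ) + b)) := by positivity
  have : b * (1 / b) = 1 := mul_one_div_cancel hb.ne'
  linarith

lemma sum_div_eN_mul_le {b : ℝ} (hb : 0 ≤ b) {S : Finset (ZLat 2)} (hS : ∀ l ∈ S, l ≠ 0) :
    ∑ l ∈ S, b / (eN l * (nsq l + b ^ 2)) ≤ 16 := by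
  obtain rfl | hb := hb.eq_or_lt
  · simp
  refine sum_le_of_le_supAbs hS (φ := fun n => b / (n * (n ^ 2 + b ^ 2))) (fun l hl => ?_)
    (fun n => by positivity) fun M => ?_
  · have hpos : (0 : ℝ) < supAbs l := Nat.cast_pos.2 (supAbs_pos (hS l hl))
    have hle := supAbs_le_eN l
    have := eN_nonneg l
    rw [← eN_sq]
    gcongr
  · calc _ = 8 * ∑ n ∈ Finset.range M, b / (((n : ℝ) + 1) ^ 2 + b ^ 2) := by
          rw [Finset.mul_sum]
          refine Finset.sum_congr rfl fun n _ => ?_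
          push_cast
          field_simp
      _ ≤ 16 := by linarith [sum_range_div_sq_add_sq_le hb M]

end ShellSums

section FockMultipliers

variable {d n : ℕ} (w : Fin d → ℝ) (ε : ℝ) (k : Fin n → ZLat d)

lemma wSq_nonneg : 0 ≤ wSq k := Finset.sum_nonneg fun _ _ => nsq_nonneg _

lemma wdotSq_nonneg : 0 ≤ wdotSq w k := Finset.sum_nonneg fun _ _ => sq_nonneg _

lemma wdotSq_le : wdotSq w k ≤ wnSq w * wSq k := by
  rw [wSq, Finset.mul_sum]
  exact Finset.sum_le_sum fun a _ => dotw_sq_le w (k a)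

/-- The multiplier `Σ_a (w · k_a)² G(L^ε(|k|²/2)) / 2` of the effective diffusion, so that `S^ε` is
multiplication by `(|k|²/2 + diffusionWeight w ε k)⁻¹`. -/
def diffusionWeight : ℝ := wdotSq w k / 2 * Geps (wnSq w) ε (wSq k / 2)

lemma diffusionWeight_nonneg : 0 ≤ diffusionWeight w ε k :=
  mul_nonneg (div_nonneg (wdotSq_nonneg w k) zero_le_two)
    (Geps_nonneg (Finset.sum_nonneg fun _ _ => sq_nonneg _) (div_nonneg (wSq_nonneg k) zero_le_two))

lemma sigma'_eq_inv (w : Fin 2 → ℝ) (ε : ℝ) (k : Fin n → ZLat 2) :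
    sigma' w ε k = (wSq k / 2 + diffusionWeight w ε k)⁻¹ := by
  rw [sigma', diffusionWeight, Geps, div_mul_eq_mul_div, ← add_div, inv_div]

lemma sigma'_nonneg (w : Fin 2 → ℝ) (ε : ℝ) (k : Fin n → ZLat 2) : 0 ≤ sigma' w ε k := by
  rw [sigma'_eq_inv]
  exact inv_nonneg.2
    (add_nonneg (div_nonneg (wSq_nonneg k) zero_le_two) (diffusionWeight_nonneg w ε k))

lemma sigma'_le_two_div (w : Fin 2 → ℝ) (ε : ℝ) {k : Fin n → ZLat 2} {x : ℝ} (hx : 0 < x)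
    (hxk : x ≤ wSq k) : sigma' w ε k ≤ 2 / x := by
  rw [sigma'_eq_inv, ← inv_div x 2]
  have := diffusionWeight_nonneg w ε k
  exact inv_anti₀ (by positivity) (by linarith)

end FockMultipliers

section Cutoff

lemma Jind_eq_zero_or_one {d : ℕ} (ε : ℝ) (l m : ZLat d) : Jind d ε l m = 0 ∨ Jind d ε l m = 1 :=
  (ite_eq_or_eq _ _ _).symm

lemma ne_zero_and_nsq_le_of_Jind_ne_zero {ε : ℝ} (hε : 0 < ε) {l m : ZLat 2}
    (h : Jind 2 ε l m ≠ 0) :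
    l ≠ 0 ∧ m ≠ 0 ∧ l + m ≠ 0 ∧ nsq l ≤ 1 / ε ^ 2 ∧ nsq m ≤ 1 / ε ^ 2 := by
  have ne_zero {k : ZLat 2} (hk : 0 < ε * eN k) : k ≠ 0 := by
    rintro rfl
    simp [eN_zero] at hk
  have nsq_le {k : ZLat 2} (hk : ε * eN k ≤ 1) : nsq k ≤ 1 / ε ^ 2 := by
    rw [le_div_iff₀' (by positivity), ← eN_sq, ← mul_pow]
    exact pow_le_one₀ (mul_nonneg hε.le (eN_nonneg k)) hk
  obtain ⟨hl, hl', hm, hm', hlm, -⟩ := (ite_ne_right_iff.1 h).1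
  exact ⟨ne_zero hl, ne_zero hm, ne_zero hlm, nsq_le hl', nsq_le hm'⟩

end Cutoff

section Fibre

open Matrix

variable {d n : ℕ}

/-- The tuple `(k₀ - l, l, k₁, …, kₙ)`: the frequency `k₀` is split into `k₀ - l` and `l`. -/
def splitFirst (k : Fin (n + 1) → ZLat d) (l : ZLat d) : Fin (n + 2) → ZLat d :=
  Fin.cons (k 0 - l) (Fin.cons l (Fin.tail k))

/-- The tuple `(q₀ + q₁, q₂, …)`; the maps `splitFirst · l` are its sections. -/
def mergeFirst (q : Fin (n + 2) → ZLat d) : Fin (n + 1) → ZLat d :=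
  Fin.cons (q 0 + q 1) fun a => q a.succ.succ

/-- The weight `Σ_{a ≥ 2} |q_a| (1/|q₀| + 1/|q₁|)`, which absorbs the terms of `|A⁺f|²` in which
two different pairs of frequencies are merged. -/
def crossWeight (q : Fin (n + 2) → ZLat d) : ℝ :=
  ∑ a : Fin n, eN (q a.succ.succ) * (1 / eN (q 0) + 1 / eN (q 1))

lemma crossWeight_nonneg (q : Fin (n + 2) → ZLat d) : 0 ≤ crossWeight q :=
  Finset.sum_nonneg fun _ _ => mul_nonneg (eN_nonneg _)
    (add_nonneg (one_div_nonneg.2 (eN_nonneg _)) (one_div_nonneg.2 (eN_nonneg _)))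

lemma sum_splitFirst (φ : ZLat d → ℝ) (k : Fin (n + 1) → ZLat d) (l : ZLat d) :
    ∑ a, φ (splitFirst k l a) = φ (k 0 - l) + (φ l + ∑ a : Fin n, φ (k a.succ)) := by
  simp only [splitFirst, Fin.sum_univ_succ, Fin.cons_zero, Fin.cons_succ, Fin.tail]

lemma crossWeight_splitFirst (k : Fin (n + 1) → ZLat d) (l : ZLat d) :
    crossWeight (splitFirst k l) =
      ∑ a : Fin n, eN (k a.succ) * (1 / eN (k 0 - l) + 1 / eN l) := rfl

/-- Half the relative frequency of the pair `(k - l, l)`, that is `l - k/2`. -/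
def relFreq (k l : ZLat d) : Fin d → ℝ := fun a => (l a : ℝ) - (k a : ℝ) / 2

lemma relFreq_dotProduct_self (k l : ZLat d) :
    relFreq k l ⬝ᵥ relFreq k l + nsq k / 4 = (nsq (k - l) + nsq l) / 2 := by
  simp only [relFreq, dotProduct, nsq, Finset.sum_div, ← Finset.sum_add_distrib]
  refine Finset.sum_congr rfl fun a _ => ?_
  rw [Pi.sub_apply, Int.cast_sub]
  ring

lemma two_mul_dotProduct_relFreq_sq_le (w : Fin d → ℝ) (k l : ZLat d) :
    2 * (w ⬝ᵥ relFreq k l) ^ 2 ≤ dotw w (k - l) ^ 2 + dotw w l ^ 2 := by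
  have dotw_l : dotw w l = w ⬝ᵥ relFreq k l + dotw w k / 2 := by
    simp only [relFreq, dotProduct, dotw, Finset.sum_div, ← Finset.sum_add_distrib]
    exact Finset.sum_congr rfl fun a _ => by ring
  have dotw_sub : dotw w (k - l) = dotw w k - dotw w l := by
    simp only [dotw, Pi.sub_apply, Int.cast_sub, mul_sub, Finset.sum_sub_distrib]
  rw [dotw_sub, dotw_l]
  linarith [sq_nonneg (dotw w k)]

/-- The part of `|splitFirst k l|²/2` that does not depend on `l`. -/
def fibreOffset (k : Fin (n + 1) → ZLat d) : ℝ := nsq (k 0) / 4 + (∑ a : Fin n, nsq (k a.succ)) / 2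

lemma wSq_splitFirst (k : Fin (n + 1) → ZLat d) (l : ZLat d) :
    wSq (splitFirst k l) / 2 = relFreq (k 0) l ⬝ᵥ relFreq (k 0) l + fibreOffset k := by
  rw [wSq, sum_splitFirst, fibreOffset, ← add_assoc, ← add_assoc, add_div,
    relFreq_dotProduct_self]

lemma quarter_le_fibreOffset {k : Fin (n + 1) → ZLat d} (hk : k 0 ≠ 0) : 1 / 4 ≤ fibreOffset k := by
  have := one_le_nsq hk
  have : 0 ≤ ∑ a : Fin n, nsq (k a.succ) := Finset.sum_nonneg fun _ _ => nsq_nonneg _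
  rw [fibreOffset]
  linarith

lemma wSq_div_two_le_two_mul_fibreOffset (k : Fin (n + 1) → ZLat d) :
    wSq k / 2 ≤ 2 * fibreOffset k := by
  have : 0 ≤ ∑ a : Fin n, nsq (k a.succ) := Finset.sum_nonneg fun _ _ => nsq_nonneg _
  rw [wSq, Fin.sum_univ_succ, fibreOffset]
  linarith

lemma sigma'_splitFirst_le (w : Fin 2 → ℝ) (ε : ℝ) {k : Fin (n + 1) → ZLat 2}
    (hk : 0 < fibreOffset k) (l : ZLat 2) :
    sigma' w ε (splitFirst k l) ≤ (resolventEnergy w ε (fibreOffset k) (relFreq (k 0) l))⁻¹ := by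
  have hy := real_dotProduct_self_nonneg (relFreq (k 0) l)
  have hw := real_dotProduct_self_nonneg w
  have hG : 0 ≤ Geps (w ⬝ᵥ w) ε (relFreq (k 0) l ⬝ᵥ relFreq (k 0) l + fibreOffset k) :=
    Geps_nonneg hw (by positivity)
  have hdot : (w ⬝ᵥ relFreq (k 0) l) ^ 2 ≤ wdotSq w (splitFirst k l) / 2 := by
    have : 0 ≤ ∑ a : Fin n, dotw w (k a.succ) ^ 2 := Finset.sum_nonneg fun _ _ => sq_nonneg _
    rw [wdotSq, sum_splitFirst (dotw w · ^ 2)]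
    linarith [two_mul_dotProduct_relFreq_sq_le w (k 0) l]
  rw [sigma'_eq_inv, diffusionWeight, wSq_splitFirst, wnSq_eq_dotProduct, resolventEnergy]
  gcongr

lemma exists_sum_sigma'_splitFirst_le {w : Fin 2 → ℝ} (hw : w ≠ 0) :
    ∃ K, ∀ ε : ℝ, 0 < ε → ε < 1 / 3 → ∀ (n : ℕ) (k : Fin (n + 1) → ZLat 2), k 0 ≠ 0 →
      ∀ S : Finset (ZLat 2), (∀ l ∈ S, nsq (k 0 - l) ≤ 1 / ε ^ 2 ∧ nsq l ≤ 1 / ε ^ 2) →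
      lam 2 ε ^ 2 / Real.pi ^ 2 * ∑ l ∈ S, sigma' w ε (splitFirst k l) ≤
        Geps (wnSq w) ε (wSq k / 2) + K * lam 2 ε ^ 2 := by
  have hc := wnSq_pos hw
  rw [wnSq_eq_dotProduct] at hc ⊢
  obtain ⟨K, hsum⟩ := exists_sum_inv_resolventEnergy_le w hc
  refine ⟨K + Real.log 2, fun ε hε hε3 n k hk S hS => ?_⟩
  have hα := quarter_le_fibreOffset hk
  have hP : 0 < wSq k / 2 := by
    have : nsq (k 0) ≤ wSq k :=
      Finset.single_le_sum (f := fun a => nsq (k a)) (fun _ _ => nsq_nonneg _) (Finset.mem_univ 0)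
    linarith [one_le_nsq hk]
  have relFreq_le : ∀ l ∈ S, relFreq (k 0) l ⬝ᵥ relFreq (k 0) l ≤ 1 / ε ^ 2 := fun l hl => by
    linarith [hS l hl, relFreq_dotProduct_self (k 0) l, nsq_nonneg (k 0)]
  calc lam 2 ε ^ 2 / Real.pi ^ 2 * ∑ l ∈ S, sigma' w ε (splitFirst k l)
      ≤ lam 2 ε ^ 2 / Real.pi ^ 2 *
          ∑ l ∈ S, (resolventEnergy w ε (fibreOffset k) (relFreq (k 0) l))⁻¹ := by
        gcongr with l
        exact sigma'_splitFirst_le w ε (by linarith) l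
    _ ≤ Geps (w ⬝ᵥ w) ε (fibreOffset k) + K * lam 2 ε ^ 2 :=
        hsum ε hε hε3 _ _ hα S relFreq_le
    _ ≤ Geps (w ⬝ᵥ w) ε (wSq k / 2) + lam 2 ε ^ 2 * Real.log 2 + K * lam 2 ε ^ 2 := by
        gcongr
        exact Geps_le_add_log_two hc hε (by linarith) hP (wSq_div_two_le_two_mul_fibreOffset k)
    _ = Geps (w ⬝ᵥ w) ε (wSq k / 2) + (K + Real.log 2) * lam 2 ε ^ 2 := by ring

lemma sigma'_splitFirst_mul_le (w : Fin 2 → ℝ) (ε : ℝ) (k : Fin (n + 1) → ZLat 2) {l : ZLat 2}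
    (hl : l ≠ 0) (hkl : k 0 - l ≠ 0) (a : Fin n) :
    sigma' w ε (splitFirst k l) * (eN (k a.succ) * (1 / eN (k 0 - l) + 1 / eN l)) ≤
      2 * (eN (k a.succ) / (eN (k 0 - l) * (nsq (k 0 - l) + eN (k a.succ) ^ 2))) +
        2 * (eN (k a.succ) / (eN l * (nsq l + eN (k a.succ) ^ 2))) := by
  have hb := eN_nonneg (k a.succ)
  have hl1 := one_le_nsq hl
  have hkl1 := one_le_nsq hkl
  have hle := one_le_eN hl
  have hkle := one_le_eN hkl
  have spectator_le : nsq (k a.succ) ≤ ∑ a : Fin n, nsq (k a.succ) :=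
    Finset.single_le_sum (f := fun a : Fin n => nsq (k a.succ)) (fun _ _ => nsq_nonneg _)
      (Finset.mem_univ a)
  have hwSq : wSq (splitFirst k l) = _ := sum_splitFirst nsq k l
  have le_fst : sigma' w ε (splitFirst k l) ≤ 2 / (nsq (k 0 - l) + eN (k a.succ) ^ 2) :=
    sigma'_le_two_div w ε (by positivity) (by rw [eN_sq]; linarith)
  have le_snd : sigma' w ε (splitFirst k l) ≤ 2 / (nsq l + eN (k a.succ) ^ 2) :=
    sigma'_le_two_div w ε (by positivity) (by rw [eN_sq]; linarith)
  calc _ = sigma' w ε (splitFirst k l) * (eN (k a.succ) / eN (k 0 - l)) +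
        sigma' w ε (splitFirst k l) * (eN (k a.succ) / eN l) := by ring
    _ ≤ 2 / (nsq (k 0 - l) + eN (k a.succ) ^ 2) * (eN (k a.succ) / eN (k 0 - l)) +
        2 / (nsq l + eN (k a.succ) ^ 2) * (eN (k a.succ) / eN l) := by gcongr
    _ = _ := by field_simp

lemma sum_sigma'_mul_crossWeight_le (w : Fin 2 → ℝ) (ε : ℝ) (k : Fin (n + 1) → ZLat 2)
    {S : Finset (ZLat 2)} (hS : ∀ l ∈ S, l ≠ 0 ∧ k 0 - l ≠ 0) :
    ∑ l ∈ S, sigma' w ε (splitFirst k l) * crossWeight (splitFirst k l) ≤ 64 * n := by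
  have sum_le (a : Fin n) : ∑ l ∈ S,
      sigma' w ε (splitFirst k l) * (eN (k a.succ) * (1 / eN (k 0 - l) + 1 / eN l)) ≤ 64 := by
    have hb := eN_nonneg (k a.succ)
    have sum_reflected := sum_div_eN_mul_le hb (S := S.image (k 0 - ·)) fun l hl => by
      obtain ⟨l', hl', rfl⟩ := Finset.mem_image.1 hl
      exact (hS l' hl').2
    rw [Finset.sum_image fun _ _ _ _ h => sub_right_injective h] at sum_reflected
    have sum_direct := sum_div_eN_mul_le hb fun l hl => (hS l hl).1
    have := Finset.sum_le_sum fun l hl =>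
      sigma'_splitFirst_mul_le w ε k (hS l hl).1 (hS l hl).2 a
    rw [Finset.sum_add_distrib, ← Finset.mul_sum, ← Finset.mul_sum] at this
    linarith
  simp only [crossWeight_splitFirst, Finset.mul_sum]
  rw [Finset.sum_comm]
  calc _ ≤ ∑ _a : Fin n, (64 : ℝ) := Finset.sum_le_sum fun a _ => sum_le a
    _ = 64 * n := by simp [mul_comm]

end Fibre

section SmallCutoff

open Filter Topology

lemma tendsto_lam_two_sq : Tendsto (fun ε => lam 2 ε ^ 2) (𝓝[>] 0) (𝓝 0) := by
  have hlog : Tendsto (fun ε : ℝ => Real.log (1 / ε ^ 2)) (𝓝[>] 0) atTop := by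
    refine Real.tendsto_log_atTop.comp ?_
    simp only [one_div, ← inv_pow]
    exact (tendsto_pow_atTop two_ne_zero).comp tendsto_inv_nhdsGT_zero
  refine hlog.inv_tendsto_atTop.congr' ?_
  filter_upwards [Ioo_mem_nhdsGT one_pos] with ε hε
  exact (lam_two_sq hε.1 hε.2).symm

lemma sum_Jind_mul_eq_sum_filter {d : ℕ} (ε M : ℝ) (p : ZLat d) (S : Finset (ZLat d))
    (φ ψ : ZLat d → ℝ) :
    ∑ l ∈ S, Jind d ε (p - l) l * (φ l * (1 + M * ψ l)) =
      ∑ l ∈ S.filter fun l => Jind d ε (p - l) l ≠ 0, φ l +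
        M * ∑ l ∈ S.filter fun l => Jind d ε (p - l) l ≠ 0, φ l * ψ l := by
  rw [Finset.mul_sum, ← Finset.sum_add_distrib, Finset.sum_filter]
  refine Finset.sum_congr rfl fun l _ => ?_
  obtain h | h := Jind_eq_zero_or_one ε (p - l) l
  · simp [h]
  · rw [if_pos (by simp [h]), h]
    ring

lemma eventually_sum_Jind_mul_sigma'_le {w : Fin 2 → ℝ} (hw : w ≠ 0) (n : ℕ) {M δ : ℝ}
    (hM : 0 ≤ M) (hδ : 0 < δ) :
    ∀ᶠ ε in 𝓝[>] 0, ∀ (k : Fin (n + 1) → ZLat 2) (S : Finset (ZLat 2)),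
      lam 2 ε ^ 2 / Real.pi ^ 2 * ∑ l ∈ S, Jind 2 ε (k 0 - l) l *
        (sigma' w ε (splitFirst k l) * (1 + M * crossWeight (splitFirst k l))) ≤
      Geps (wnSq w) ε (wSq k / 2) + δ := by
  obtain ⟨K, hsum⟩ := exists_sum_sigma'_splitFirst_le hw
  have error_lt : ∀ᶠ ε in 𝓝[>] 0, (K + M * (64 * n)) * lam 2 ε ^ 2 < δ :=
    (tendsto_lam_two_sq.const_mul _).eventually_lt_const (by simpa using hδ)
  filter_upwards [error_lt, Ioo_mem_nhdsGT (by norm_num : (0 : ℝ) < 1 / 3)] with ε hδε ⟨hε, hε3⟩ k S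
  have hadm {l : ZLat 2} (hl : l ∈ S.filter fun l => Jind 2 ε (k 0 - l) l ≠ 0) :=
    ne_zero_and_nsq_le_of_Jind_ne_zero hε (Finset.mem_filter.1 hl).2
  rw [sum_Jind_mul_eq_sum_filter]
  set T := S.filter fun l => Jind 2 ε (k 0 - l) l ≠ 0
  by_cases hk : k 0 = 0
  · have hT : T = ∅ := Finset.eq_empty_of_forall_notMem fun l hl => by
      simpa [hk] using (hadm hl).2.2.1
    have := Geps_nonneg (ε := ε) (wnSq_pos hw).le (div_nonneg (wSq_nonneg k) zero_le_two)
    simp only [hT, Finset.sum_empty, mul_zero, add_zero]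
    positivity
  have diagonal_le := hsum ε hε hε3 n k hk T fun l hl => (hadm hl).2.2.2
  have cross_le : lam 2 ε ^ 2 / Real.pi ^ 2 *
      (M * ∑ l ∈ T, sigma' w ε (splitFirst k l) * crossWeight (splitFirst k l)) ≤
      lam 2 ε ^ 2 * (M * (64 * n)) := by
    have hpi : 1 ≤ Real.pi ^ 2 := one_le_pow₀ (by linarith [Real.pi_gt_three])
    have hle : lam 2 ε ^ 2 / Real.pi ^ 2 ≤ lam 2 ε ^ 2 := div_le_self (sq_nonneg _) hpi
    have := sum_sigma'_mul_crossWeight_le w ε k fun l hl => ⟨(hadm hl).2.1, (hadm hl).1⟩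
    gcongr
    exact mul_nonneg hM (Finset.sum_nonneg fun l _ =>
      mul_nonneg (sigma'_nonneg w ε _) (crossWeight_nonneg _))
  rw [mul_add]
  linarith

end SmallCutoff

section Pairs

variable {d n : ℕ}

/-- The pairs of positions merged by `A⁺_ε`. -/
abbrev PositionPair (n : ℕ) := {p : Fin (n + 2) × Fin (n + 2) // p.1 < p.2}

lemma sum_sum_dite_lt {E : Type*} [AddCommMonoid E] (F : PositionPair n → E) :
    (∑ i : Fin (n + 2), ∑ j : Fin (n + 2), if h : i < j then F ⟨(i, j), h⟩ else 0) = ∑ P, F P := by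
  rw [← Fintype.sum_prod_type' fun i j => if h : i < j then F ⟨(i, j), h⟩ else 0,
    ← Finset.sum_filter_of_ne (p := fun p : Fin (n + 2) × Fin (n + 2) => p.1 < p.2)
      fun p _ h => (dite_ne_right_iff.1 h).1,
    Finset.sum_subtype (p := fun p => p.1 < p.2) _ fun p => by simp]
  exact Finset.sum_congr rfl fun P _ => dif_pos P.2

lemma two_mul_card_positionPair (n : ℕ) :
    2 * Fintype.card (PositionPair n) = (n + 2) * (n + 1) := by
  rw [Fintype.card_eq_sum_ones, ← sum_sum_dite_lt, Finset.sum_comm]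
  have card_below (j : Fin (n + 2)) :
      (∑ i : Fin (n + 2), if _h : i < j then 1 else 0) = (j : ℕ) := by
    simp [Finset.filter_gt_eq_Iio]
  simp only [card_below]
  rw [Fin.sum_univ_eq_sum_range fun j => j, mul_comm, Finset.sum_range_id_mul_two]
  rfl

lemma injective_sym2_positionPair :
    Function.Injective fun P : PositionPair n => s(P.1.1, P.1.2) := by
  rintro ⟨⟨i, j⟩, hij⟩ ⟨⟨i', j'⟩, hij'⟩ h
  obtain ⟨rfl, rfl⟩ | ⟨rfl, rfl⟩ := Sym2.eq_iff.1 h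
  · rfl
  · exact absurd hij hij'.not_gt

lemma exists_positionPair_sym2_eq {i j : Fin (n + 2)} (h : i ≠ j) :
    ∃ P : PositionPair n, s(P.1.1, P.1.2) = s(i, j) := by
  obtain hij | hij := h.lt_or_gt
  · exact ⟨⟨(i, j), hij⟩, rfl⟩
  · exact ⟨⟨(j, i), hij⟩, Sym2.eq_swap⟩

lemma injective_cons_cons_remove2 (P : PositionPair n) :
    Function.Injective
      (Fin.cons P.1.1 (Fin.cons P.1.2 (remove2 id P.1.1 P.1.2 P.2)) :
        Fin (n + 2) → Fin (n + 2)) := by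
  have succAbove_fst : P.1.2.succAbove (Fin.castLT P.1.1
      (Nat.lt_of_lt_of_le (Fin.lt_def.mp P.2) (Nat.lt_succ_iff.mp P.1.2.isLt))) = P.1.1 :=
    Fin.succAbove_of_castSucc_lt _ _ P.2
  rw [Fin.cons_injective_iff, Fin.cons_injective_iff, Fin.range_cons]
  refine ⟨?_, ?_, Fin.succAbove_right_injective.comp Fin.succAbove_right_injective⟩
  · rintro (h | ⟨a, ha⟩)
    · exact P.2.ne h
    · exact Fin.succAbove_ne _ _ (Fin.succAbove_right_injective (ha.trans succAbove_fst.symm))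
  · rintro ⟨a, ha⟩
    exact Fin.succAbove_ne _ _ ha

/-- The permutation of the positions that moves the pair `P` to the front. -/
def pairPerm (P : PositionPair n) : Equiv.Perm (Fin (n + 2)) :=
  Equiv.ofBijective _ (Finite.injective_iff_bijective.1 (injective_cons_cons_remove2 P))

/-- The summand of `A⁺_ε f` at `q` belonging to the merging of `q₀` and `q₁`. -/
def pairTerm (w : Fin d → ℝ) (ε : ℝ) (f : Chaos d (n + 1)) (q : Fin (n + 2) → ZLat d) : ℂ :=
  ((dotw w (q 0 + q 1) : ℝ) : ℂ) * ((Jind d ε (q 0) (q 1) : ℝ) : ℂ) * f (mergeFirst q)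

lemma Aplus_eq_sum_pairTerm (w : Fin d → ℝ) (ε : ℝ) (f : Chaos d (n + 1))
    (k : Fin (n + 2) → ZLat d) :
    Aplus d w ε f k = -(2 * Complex.I / (((2 * Real.pi) ^ ((d : ℝ) / 2) : ℝ) : ℂ)) *
      ((lam d ε / ((n : ℝ) + 2) : ℝ) : ℂ) * ∑ P, pairTerm w ε f (k ∘ pairPerm P) := by
  rw [← sum_sum_dite_lt fun P => pairTerm w ε f (k ∘ pairPerm P)]
  rfl

lemma norm_Aplus_sq (w : Fin 2 → ℝ) (ε : ℝ) (f : Chaos 2 (n + 1)) (k : Fin (n + 2) → ZLat 2) :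
    ‖Aplus 2 w ε f k‖ ^ 2 = (((n : ℝ) + 2) ^ 2)⁻¹ * (lam 2 ε ^ 2 / Real.pi ^ 2) *
      ‖∑ P, pairTerm w ε f (k ∘ pairPerm P)‖ ^ 2 := by
  have two_pi : (2 * Real.pi) ^ (((2 : ℕ) : ℝ) / 2) = 2 * Real.pi := by norm_num
  rw [Aplus_eq_sum_pairTerm, two_pi]
  simp only [norm_mul, norm_neg, norm_div, Complex.norm_I, Complex.norm_real, Complex.norm_ofNat,
    Real.norm_eq_abs, mul_pow, div_pow, sq_abs]
  field

end Pairs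

section PermutationInvariance

variable {d n : ℕ}

lemma wSq_comp_perm (k : Fin n → ZLat d) (τ : Equiv.Perm (Fin n)) : wSq (k ∘ τ) = wSq k :=
  Equiv.sum_comp τ fun a => nsq (k a)

lemma wdotSq_comp_perm (w : Fin d → ℝ) (k : Fin n → ZLat d) (τ : Equiv.Perm (Fin n)) :
    wdotSq w (k ∘ τ) = wdotSq w k :=
  Equiv.sum_comp τ fun a => dotw w (k a) ^ 2

lemma sigma'_comp_perm (w : Fin 2 → ℝ) (ε : ℝ) (k : Fin n → ZLat 2) (τ : Equiv.Perm (Fin n)) :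
    sigma' w ε (k ∘ τ) = sigma' w ε k := by
  rw [sigma', sigma', wSq_comp_perm, wdotSq_comp_perm]

lemma Symm.sigma'_mul {w : Fin 2 → ℝ} {ε : ℝ} {f : Chaos 2 n} (hf : Symm f) :
    Symm fun k => ((sigma' w ε k : ℝ) : ℂ) * f k := fun τ k => by
  simp only [sigma'_comp_perm, hf τ k]

lemma Symm.add {f g : Chaos d n} (hf : Symm f) (hg : Symm g) : Symm fun k => f k + g k :=
  fun τ k => by simp only [hf τ k, hg τ k]

lemma Jind_comm (ε : ℝ) (l m : ZLat d) : Jind d ε l m = Jind d ε m l := by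
  rw [Jind, Jind, add_comm l m]
  exact if_congr (by tauto) rfl rfl

lemma mergeFirst_comp_perm {θ : Equiv.Perm (Fin (n + 2))} (hθ : s(θ 0, θ 1) = s(0, 1))
    (q : Fin (n + 2) → ZLat d) :
    ∃ ρ : Equiv.Perm (Fin (n + 1)), mergeFirst (q ∘ θ) = mergeFirst q ∘ ρ := by
  have exists_succ (a : Fin n) : ∃ b : Fin n, θ a.succ.succ = b.succ.succ := by
    have ne_fst : θ a.succ.succ ≠ θ 0 := θ.injective.ne (Fin.succ_ne_zero _)
    have ne_snd : θ a.succ.succ ≠ θ 1 := θ.injective.ne (by simp [Fin.ext_iff])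
    have ne_zero_one : θ a.succ.succ ≠ 0 ∧ θ a.succ.succ ≠ 1 := by
      obtain ⟨h0, h1⟩ | ⟨h0, h1⟩ := Sym2.eq_iff.1 hθ
      · exact ⟨h0 ▸ ne_fst, h1 ▸ ne_snd⟩
      · exact ⟨h1 ▸ ne_snd, h0 ▸ ne_fst⟩
    obtain ⟨c, hc⟩ := Fin.exists_succ_eq.2 ne_zero_one.1
    obtain ⟨b, rfl⟩ := Fin.exists_succ_eq.2 fun h : c = 0 => ne_zero_one.2 (by rw [← hc, h]; rfl)
    exact ⟨b, hc.symm⟩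
  choose ρ hρ using exists_succ
  have hρ_inj : Function.Injective ρ := fun a b h =>
    Fin.succ_injective _ (Fin.succ_injective _ (θ.injective (by rw [hρ, hρ, h])))
  have cons_inj : Function.Injective (Fin.cons 0 (Fin.succ ∘ ρ) : Fin (n + 1) → Fin (n + 1)) :=
    Fin.cons_injective_iff.2
      ⟨by rintro ⟨a, ha⟩; exact Fin.succ_ne_zero _ ha, (Fin.succ_injective _).comp hρ_inj⟩
  refine ⟨Equiv.ofBijective _ (Finite.injective_iff_bijective.1 cons_inj), ?_⟩
  funext a
  refine Fin.cases ?_ (fun b => ?_) a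
  · change q (θ 0) + q (θ 1) = q 0 + q 1
    obtain ⟨h0, h1⟩ | ⟨h0, h1⟩ := Sym2.eq_iff.1 hθ
    · rw [h0, h1]
    · rw [h0, h1, add_comm]
  · exact congrArg q (hρ b)

lemma Symm.pairTerm_comp_perm {f : Chaos d (n + 1)} (hf : Symm f) (w : Fin d → ℝ) (ε : ℝ)
    {θ : Equiv.Perm (Fin (n + 2))} (hθ : s(θ 0, θ 1) = s(0, 1)) (q : Fin (n + 2) → ZLat d) :
    pairTerm w ε f (q ∘ θ) = pairTerm w ε f q := by
  obtain ⟨ρ, hρ⟩ := mergeFirst_comp_perm hθ q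
  rw [pairTerm, pairTerm, hρ, hf]
  obtain ⟨h0, h1⟩ | ⟨h0, h1⟩ := Sym2.eq_iff.1 hθ
  · simp only [Function.comp_apply, h0, h1]
  · simp only [Function.comp_apply, h0, h1, add_comm (q 1), Jind_comm ε (q 1)]

lemma Symm.pairTerm_comp_eq {f : Chaos d (n + 1)} (hf : Symm f) (w : Fin d → ℝ) (ε : ℝ)
    {π π' : Equiv.Perm (Fin (n + 2))} (h : s(π 0, π 1) = s(π' 0, π' 1))
    (k : Fin (n + 2) → ZLat d) : pairTerm w ε f (k ∘ π) = pairTerm w ε f (k ∘ π') := by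
  have hθ : s((π'⁻¹ * π) 0, (π'⁻¹ * π) 1) = s(0, 1) := by
    simpa using congrArg (Sym2.map (π'⁻¹ : Equiv.Perm _)) h
  rw [← hf.pairTerm_comp_perm w ε hθ (k ∘ π'), Function.comp_assoc, ← Equiv.Perm.coe_mul,
    mul_inv_cancel_left]

lemma Symm.aplus {f : Chaos d (n + 1)} (hf : Symm f) (w : Fin d → ℝ) (ε : ℝ) :
    Symm (Aplus d w ε f) := by
  intro τ k
  have exists_image (P : PositionPair n) : ∃ Q : PositionPair n,
      s(Q.1.1, Q.1.2) = s(τ P.1.1, τ P.1.2) :=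
    exists_positionPair_sym2_eq (τ.injective.ne P.2.ne)
  choose image himage using exists_image
  have image_inj : Function.Injective image := fun P Q h => injective_sym2_positionPair <|
    Sym2.map.injective τ.injective <| by
      simp only [Sym2.map_mk, ← himage, h]
  rw [Aplus_eq_sum_pairTerm, Aplus_eq_sum_pairTerm]
  congr 1
  refine Fintype.sum_bijective image (Finite.injective_iff_bijective.1 image_inj) _ _ fun P => ?_
  exact hf.pairTerm_comp_eq w ε (π := τ * pairPerm P) (π' := pairPerm (image P)) (himage P).symm k

end PermutationInvariance

section CrossTerms

variable {n : ℕ}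

lemma exists_eq_succ_succ_of_sym2_ne {π π' : Equiv.Perm (Fin (n + 2))}
    (h : s(π 0, π 1) ≠ s(π' 0, π' 1)) :
    ∃ b, (b = 0 ∨ b = 1) ∧ ∃ c : Fin n, π b = π' c.succ.succ := by
  by_contra! hnot
  have eq_zero_or_one (b : Fin (n + 2)) (hb : b = 0 ∨ b = 1) : π b = π' 0 ∨ π b = π' 1 := by
    obtain ⟨e, he⟩ := π'.surjective (π b)
    have he' := hnot b hb
    rw [← he] at he' ⊢
    revert he'
    refine Fin.cases (fun _ => Or.inl rfl) (fun e => ?_) e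
    revert e
    exact Fin.cases (fun _ => Or.inr rfl) fun c hc => absurd rfl (hc c)
  have hne : π 0 ≠ π 1 := π.injective.ne Fin.zero_ne_one
  apply h
  obtain h0 | h0 := eq_zero_or_one 0 (Or.inl rfl) <;>
    obtain h1 | h1 := eq_zero_or_one 1 (Or.inr rfl)
  · exact absurd (h0.trans h1.symm) hne
  · rw [h0, h1]
  · rw [h0, h1, Sym2.eq_swap]
  · exact absurd (h0.trans h1.symm) hne

lemma sq_sum_le_sum_one_add_card_mul {ι : Type*} [Fintype ι] {t V : ι → ℝ} (hV : ∀ P, 0 ≤ V P)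
    (h : ∀ P Q, P ≠ Q → 2 * (t P * t Q) ≤ V P * t P ^ 2 + V Q * t Q ^ 2) :
    (∑ P, t P) ^ 2 ≤ ∑ P, (1 + Fintype.card ι * V P) * t P ^ 2 := by
  have mul_le (P Q : ι) : t P * t Q ≤
      (if P = Q then t P ^ 2 else 0) + (V P * t P ^ 2 / 2 + V Q * t Q ^ 2 / 2) := by
    split_ifs with hPQ
    · have := mul_nonneg (hV Q) (sq_nonneg (t Q))
      rw [hPQ, ← sq]
      linarith
    · linarith [h P Q hPQ]
  calc (∑ P, t P) ^ 2 = ∑ P, ∑ Q, t P * t Q := by rw [sq, Finset.sum_mul_sum]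
    _ ≤ ∑ P, ∑ Q, ((if P = Q then t P ^ 2 else 0) + (V P * t P ^ 2 / 2 + V Q * t Q ^ 2 / 2)) :=
        Finset.sum_le_sum fun P _ => Finset.sum_le_sum fun Q _ => mul_le P Q
    _ = ∑ P, t P ^ 2 + Fintype.card ι * ∑ P, V P * t P ^ 2 := by
        simp only [Finset.sum_add_distrib, Finset.sum_ite_eq, Finset.mem_univ, if_true,
          Finset.sum_const, Finset.card_univ, nsmul_eq_mul, ← Finset.mul_sum, ← Finset.sum_div]
        ring
    _ = ∑ P, (1 + Fintype.card ι * V P) * t P ^ 2 := by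
        simp only [Finset.mul_sum, ← Finset.sum_add_distrib]
        exact Finset.sum_congr rfl fun P _ => by ring

lemma div_le_crossWeight {d : ℕ} (q : Fin (n + 2) → ZLat d) {b : Fin (n + 2)} (hb : b = 0 ∨ b = 1)
    (c : Fin n) : eN (q c.succ.succ) / eN (q b) ≤ crossWeight q := by
  have inv_nonneg (b : Fin (n + 2)) : 0 ≤ 1 / eN (q b) := div_nonneg zero_le_one (eN_nonneg _)
  have inv_le : 1 / eN (q b) ≤ 1 / eN (q 0) + 1 / eN (q 1) := by
    obtain rfl | rfl := hb
    · exact le_add_of_nonneg_right (inv_nonneg 1)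
    · exact le_add_of_nonneg_left (inv_nonneg 0)
  calc eN (q c.succ.succ) / eN (q b) = eN (q c.succ.succ) * (1 / eN (q b)) := div_eq_mul_one_div _ _
    _ ≤ eN (q c.succ.succ) * (1 / eN (q 0) + 1 / eN (q 1)) :=
        mul_le_mul_of_nonneg_left inv_le (eN_nonneg _)
    _ ≤ crossWeight q :=
        Finset.single_le_sum
          (f := fun c : Fin n => eN (q c.succ.succ) * (1 / eN (q 0) + 1 / eN (q 1)))
          (fun c _ => mul_nonneg (eN_nonneg _) (add_nonneg (inv_nonneg 0) (inv_nonneg 1)))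
          (Finset.mem_univ c)

lemma eN_pos_of_pairTerm_ne_zero {w : Fin 2 → ℝ} {ε : ℝ} (hε : 0 < ε) {f : Chaos 2 (n + 1)}
    {q : Fin (n + 2) → ZLat 2} (h : pairTerm w ε f q ≠ 0) {b : Fin (n + 2)} (hb : b = 0 ∨ b = 1) :
    0 < eN (q b) := by
  have hJ : Jind 2 ε (q 0) (q 1) ≠ 0 := fun hJ => h (by simp [pairTerm, hJ])
  obtain ⟨h0, h1, -⟩ := ne_zero_and_nsq_le_of_Jind_ne_zero hε hJ
  obtain rfl | rfl := hb
  · exact one_pos.trans_le (one_le_eN h0)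
  · exact one_pos.trans_le (one_le_eN h1)

lemma two_mul_mul_le_div_mul_sq_add {a b : ℝ} (ha : 0 < a) (hb : 0 < b) (x y : ℝ) :
    2 * (x * y) ≤ a / b * x ^ 2 + b / a * y ^ 2 := by
  have : a / b * x ^ 2 + b / a * y ^ 2 - 2 * (x * y) = (a * x - b * y) ^ 2 / (a * b) := by
    field
  linarith [div_nonneg (sq_nonneg (a * x - b * y)) (mul_pos ha hb).le]

-- Each of two different pairs contains a position spectating the other; the two quotients of the
-- frequencies there are inverse to each other, so that AM-GM applies with them as weights.
lemma two_mul_norm_pairTerm_mul_le (w : Fin 2 → ℝ) {ε : ℝ} (hε : 0 < ε) (f : Chaos 2 (n + 1))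
    (k : Fin (n + 2) → ZLat 2) {π π' : Equiv.Perm (Fin (n + 2))}
    (h : s(π 0, π 1) ≠ s(π' 0, π' 1)) :
    2 * (‖pairTerm w ε f (k ∘ π)‖ * ‖pairTerm w ε f (k ∘ π')‖) ≤
      crossWeight (k ∘ π) * ‖pairTerm w ε f (k ∘ π)‖ ^ 2 +
        crossWeight (k ∘ π') * ‖pairTerm w ε f (k ∘ π')‖ ^ 2 := by
  have hV := crossWeight_nonneg (k ∘ π)
  have hV' := crossWeight_nonneg (k ∘ π')
  by_cases hT : pairTerm w ε f (k ∘ π) = 0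
  · rw [hT, norm_zero, zero_mul, mul_zero]
    positivity
  by_cases hT' : pairTerm w ε f (k ∘ π') = 0
  · rw [hT', norm_zero, mul_zero, mul_zero]
    positivity
  obtain ⟨b, hb, c', hbc⟩ := exists_eq_succ_succ_of_sym2_ne h
  obtain ⟨b', hb', c, hbc'⟩ := exists_eq_succ_succ_of_sym2_ne h.symm
  have ratio_le := div_le_crossWeight (k ∘ π) hb c
  have ratio_le' := div_le_crossWeight (k ∘ π') hb' c'
  have hpos := eN_pos_of_pairTerm_ne_zero hε hT hb
  have hpos' := eN_pos_of_pairTerm_ne_zero hε hT' hb'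
  simp only [Function.comp_apply, ← hbc, ← hbc'] at ratio_le ratio_le' hpos hpos'
  refine (two_mul_mul_le_div_mul_sq_add hpos' hpos _ _).trans ?_
  gcongr

end CrossTerms

section Energy

open ENNReal

variable {d n : ℕ}

/-- The weighted Fock norm `n! Σ_k ρ(k) |f(k)|²`, with values in `[0, ∞]` so that no summability
has to be known in advance. -/
def energy (ρ : (Fin n → ZLat d) → ℝ) (f : Chaos d n) : ℝ≥0∞ :=
  n.factorial * ∑' k, ENNReal.ofReal (ρ k * ‖f k‖ ^ 2)

lemma energy_zero (ρ : (Fin n → ZLat d) → ℝ) : energy ρ (0 : Chaos d n) = 0 := by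
  simp [energy]

lemma energy_add {ρ ρ' : (Fin n → ZLat d) → ℝ} (hρ : ∀ k, 0 ≤ ρ k) (hρ' : ∀ k, 0 ≤ ρ' k)
    (f : Chaos d n) : energy (fun k => ρ k + ρ' k) f = energy ρ f + energy ρ' f := by
  simp only [energy]
  rw [← mul_add, ← ENNReal.tsum_add]
  congr 1
  refine tsum_congr fun k => ?_
  rw [add_mul, ENNReal.ofReal_add (mul_nonneg (hρ k) (sq_nonneg _))
    (mul_nonneg (hρ' k) (sq_nonneg _))]

lemma energy_ofNat_mul (c : ℕ) [c.AtLeastTwo] (ρ : (Fin n → ZLat d) → ℝ) (f : Chaos d n) :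
    energy (fun k => ofNat(c) * ρ k) f = ofNat(c) * energy ρ f := by
  simp only [energy]
  rw [mul_left_comm, ← ENNReal.tsum_mul_left (a := ofNat(c))]
  congr 1
  refine tsum_congr fun k => ?_
  rw [mul_assoc, ENNReal.ofReal_mul (Nat.ofNat_nonneg c), ENNReal.ofReal_ofNat]

lemma energy_mono {ρ ρ' : (Fin n → ZLat d) → ℝ} (h : ∀ k, ρ k ≤ ρ' k) (f : Chaos d n) :
    energy ρ f ≤ energy ρ' f := by
  simp only [energy]
  gcongr with k
  exact h k

lemma energy_le_add_energy {ρ ρ₁ ρ₂ : (Fin n → ZLat d) → ℝ} {u v g : Chaos d n}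
    (h : ∀ k, ρ k * ‖u k‖ ^ 2 ≤ ρ₁ k * ‖v k‖ ^ 2 + ρ₂ k * ‖g k‖ ^ 2) :
    energy ρ u ≤ energy ρ₁ v + energy ρ₂ g := by
  simp only [energy]
  rw [← mul_add, ← ENNReal.tsum_add]
  gcongr with k
  exact (ENNReal.ofReal_le_ofReal (h k)).trans ENNReal.ofReal_add_le

lemma tsum_comp_perm {ι X : Type*} (F : (ι → X) → ℝ≥0∞) (τ : Equiv.Perm ι) :
    ∑' k, F (k ∘ τ) = ∑' k, F k :=
  Equiv.tsum_eq (Equiv.arrowCongr τ.symm (Equiv.refl X)) F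

lemma succ_mul_tsum_ofReal_eq {X : Type*} {φ : X → ℝ} (hφ : ∀ x, 0 ≤ φ x)
    {A : (Fin (n + 1) → X) → ℝ} (hA : ∀ k, 0 ≤ A k)
    (hA_symm : ∀ (τ : Equiv.Perm (Fin (n + 1))) k, A (k ∘ τ) = A k) :
    ((n + 1 : ℕ) : ℝ≥0∞) * ∑' k, ENNReal.ofReal (φ (k 0) * A k) =
      ∑' k, ENNReal.ofReal ((∑ a, φ (k a)) * A k) := by
  have tsum_coord (a : Fin (n + 1)) : ∑' k, ENNReal.ofReal (φ (k a) * A k) =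
      ∑' k, ENNReal.ofReal (φ (k 0) * A k) := by
    rw [← tsum_comp_perm (fun k => ENNReal.ofReal (φ (k a) * A k)) (Equiv.swap 0 a)]
    refine tsum_congr fun k => ?_
    rw [hA_symm, Function.comp_apply, Equiv.swap_apply_right]
  have ofReal_sum (k : Fin (n + 1) → X) : ENNReal.ofReal ((∑ a, φ (k a)) * A k) =
      ∑ a, ENNReal.ofReal (φ (k a) * A k) := by
    rw [Finset.sum_mul, ENNReal.ofReal_sum_of_nonneg fun a _ => mul_nonneg (hφ _) (hA k)]
  simp only [ofReal_sum]
  rw [Summable.tsum_finsetSum fun _ _ => ENNReal.summable]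
  simp only [tsum_coord, Finset.sum_const, Finset.card_univ, Fintype.card_fin, nsmul_eq_mul]

end Energy

section AplusEstimate

open ENNReal Filter Topology

variable {n : ℕ}

/-- The contribution to `‖(S^ε)^{1/2} A⁺_ε f‖²` of the merging of the first two frequencies, with
the factor `1 + M V` that absorbs the cross terms, up to the combinatorial factor. -/
def pairEnergy (w : Fin 2 → ℝ) (ε M : ℝ) (f : Chaos 2 (n + 1)) (q : Fin (n + 2) → ZLat 2) : ℝ :=
  lam 2 ε ^ 2 / Real.pi ^ 2 * (sigma' w ε q * (1 + M * crossWeight q)) * ‖pairTerm w ε f q‖ ^ 2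

lemma pairEnergy_nonneg (w : Fin 2 → ℝ) (ε : ℝ) {M : ℝ} (hM : 0 ≤ M) (f : Chaos 2 (n + 1))
    (q : Fin (n + 2) → ZLat 2) : 0 ≤ pairEnergy w ε M f q := by
  have := sigma'_nonneg w ε q
  have := crossWeight_nonneg q
  rw [pairEnergy]
  positivity

lemma sigma'_mul_norm_Aplus_sq_le (w : Fin 2 → ℝ) {ε : ℝ} (hε : 0 < ε) (f : Chaos 2 (n + 1))
    (k : Fin (n + 2) → ZLat 2) :
    sigma' w ε k * ‖Aplus 2 w ε f k‖ ^ 2 ≤ (((n : ℝ) + 2) ^ 2)⁻¹ *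
      ∑ P, pairEnergy w ε (Fintype.card (PositionPair n)) f (k ∘ pairPerm P) := by
  have hσ := sigma'_nonneg w ε k
  have norm_sum_sq_le : ‖∑ P, pairTerm w ε f (k ∘ pairPerm P)‖ ^ 2 ≤
      ∑ P : PositionPair n, (1 + Fintype.card (PositionPair n) * crossWeight (k ∘ pairPerm P)) *
        ‖pairTerm w ε f (k ∘ pairPerm P)‖ ^ 2 := by
    refine (pow_le_pow_left₀ (norm_nonneg _) (norm_sum_le _ _) 2).trans ?_
    exact sq_sum_le_sum_one_add_card_mul (fun _ => crossWeight_nonneg _) fun P Q hPQ =>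
      two_mul_norm_pairTerm_mul_le w hε f k (injective_sym2_positionPair.ne hPQ)
  rw [norm_Aplus_sq]
  calc sigma' w ε k * ((((n : ℝ) + 2) ^ 2)⁻¹ * (lam 2 ε ^ 2 / Real.pi ^ 2) *
        ‖∑ P, pairTerm w ε f (k ∘ pairPerm P)‖ ^ 2)
      ≤ sigma' w ε k * ((((n : ℝ) + 2) ^ 2)⁻¹ * (lam 2 ε ^ 2 / Real.pi ^ 2) *
        ∑ P : PositionPair n, (1 + Fintype.card (PositionPair n) * crossWeight (k ∘ pairPerm P)) *
          ‖pairTerm w ε f (k ∘ pairPerm P)‖ ^ 2) := by gcongr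
    _ = _ := by
        simp only [Finset.mul_sum, pairEnergy, sigma'_comp_perm]
        exact Finset.sum_congr rfl fun P _ => by ring

lemma mergeFirst_splitFirst {d : ℕ} (k : Fin (n + 1) → ZLat d) (l : ZLat d) :
    mergeFirst (splitFirst k l) = k := by
  funext a
  exact Fin.cases (sub_add_cancel _ _) (fun _ => rfl) a

/-- Splitting the first frequency is a bijection onto the tuples with one more entry. -/
def splitFirstEquiv (d n : ℕ) : (Fin (n + 1) → ZLat d) × ZLat d ≃ (Fin (n + 2) → ZLat d) where
  toFun p := splitFirst p.1 p.2
  invFun q := (mergeFirst q, q 1)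
  left_inv p := Prod.ext (mergeFirst_splitFirst p.1 p.2) rfl
  right_inv q := by
    funext a
    refine Fin.cases (add_sub_cancel_right _ _) (fun a => ?_) a
    exact Fin.cases rfl (fun _ => rfl) a

lemma pairEnergy_splitFirst (w : Fin 2 → ℝ) (ε M : ℝ) (f : Chaos 2 (n + 1))
    (k : Fin (n + 1) → ZLat 2) (l : ZLat 2) :
    pairEnergy w ε M f (splitFirst k l) = dotw w (k 0) ^ 2 * ‖f k‖ ^ 2 *
      (lam 2 ε ^ 2 / Real.pi ^ 2 * (Jind 2 ε (k 0 - l) l *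
        (sigma' w ε (splitFirst k l) * (1 + M * crossWeight (splitFirst k l))))) := by
  have norm_pairTerm_sq : ‖pairTerm w ε f (splitFirst k l)‖ ^ 2 =
      dotw w (k 0) ^ 2 * Jind 2 ε (k 0 - l) l * ‖f k‖ ^ 2 := by
    have fst_add_snd : splitFirst k l 0 + splitFirst k l 1 = k 0 := sub_add_cancel _ _
    have J_sq : Jind 2 ε (k 0 - l) l ^ 2 = Jind 2 ε (k 0 - l) l := by
      obtain h | h := Jind_eq_zero_or_one ε (k 0 - l) l <;> simp [h]
    rw [pairTerm, fst_add_snd, mergeFirst_splitFirst, norm_mul, norm_mul, Complex.norm_real,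
      Complex.norm_real, mul_pow, mul_pow, Real.norm_eq_abs, Real.norm_eq_abs, sq_abs, sq_abs]
    exact congrArg (fun x => dotw w (k 0) ^ 2 * x * ‖f k‖ ^ 2) J_sq
  rw [pairEnergy, norm_pairTerm_sq]
  ring

lemma tsum_pairEnergy_splitFirst_le {w : Fin 2 → ℝ} {ε M B : ℝ} (hM : 0 ≤ M)
    {k : Fin (n + 1) → ZLat 2}
    (hB : ∀ S : Finset (ZLat 2), lam 2 ε ^ 2 / Real.pi ^ 2 * ∑ l ∈ S, Jind 2 ε (k 0 - l) l *
      (sigma' w ε (splitFirst k l) * (1 + M * crossWeight (splitFirst k l))) ≤ B)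
    (f : Chaos 2 (n + 1)) :
    ∑' l, ENNReal.ofReal (pairEnergy w ε M f (splitFirst k l)) ≤
      ENNReal.ofReal (dotw w (k 0) ^ 2 * (B * ‖f k‖ ^ 2)) := by
  rw [ENNReal.tsum_eq_iSup_sum]
  refine iSup_le fun S => ?_
  rw [← ENNReal.ofReal_sum_of_nonneg fun l _ => pairEnergy_nonneg w ε hM f _]
  refine ENNReal.ofReal_le_ofReal ?_
  simp only [pairEnergy_splitFirst, ← Finset.mul_sum]
  calc _ ≤ dotw w (k 0) ^ 2 * ‖f k‖ ^ 2 * B := by gcongr; exact hB S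
    _ = _ := by ring

lemma tsum_pairEnergy_eq (w : Fin 2 → ℝ) (ε M : ℝ) (f : Chaos 2 (n + 1)) :
    ∑' q, ENNReal.ofReal (pairEnergy w ε M f q) =
      ∑' k, ∑' l, ENNReal.ofReal (pairEnergy w ε M f (splitFirst k l)) := by
  rw [← (splitFirstEquiv 2 n).tsum_eq]
  exact ENNReal.tsum_prod (f := fun k l => ENNReal.ofReal (pairEnergy w ε M f (splitFirst k l)))

lemma factorial_mul_inv_sq_mul_card_positionPair (n : ℕ) :
    ((n + 2).factorial : ℝ) * (((n : ℝ) + 2) ^ 2)⁻¹ * Fintype.card (PositionPair n) =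
      (n + 1).factorial * 2⁻¹ * ((n : ℝ) + 1) := by
  have card_eq : (Fintype.card (PositionPair n) : ℝ) = (n + 2) * (n + 1) / 2 := by
    have := two_mul_card_positionPair n
    rify at this
    linarith
  rw [card_eq, Nat.factorial_succ (n + 1)]
  push_cast
  field

lemma energy_sigma'_Aplus_le_tsum_pairEnergy (w : Fin 2 → ℝ) {ε : ℝ} (hε : 0 < ε)
    (f : Chaos 2 (n + 1)) :
    energy (sigma' w ε) (Aplus 2 w ε f) ≤ ((n + 1).factorial : ℝ≥0∞) * (2⁻¹ * ((n + 1 : ℕ) *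
      ∑' q, ENNReal.ofReal (pairEnergy w ε (Fintype.card (PositionPair n)) f q))) := by
  set M : ℝ := (Fintype.card (PositionPair n) : ℝ)
  have hM0 : 0 ≤ M := Nat.cast_nonneg _
  set T := ∑' q, ENNReal.ofReal (pairEnergy w ε M f q)
  have tsum_le : ∑' k, ENNReal.ofReal (sigma' w ε k * ‖Aplus 2 w ε f k‖ ^ 2) ≤
      ENNReal.ofReal ((((n : ℝ) + 2) ^ 2)⁻¹) * (ENNReal.ofReal M * T) := by
    calc _ ≤ ∑' k, ENNReal.ofReal ((((n : ℝ) + 2) ^ 2)⁻¹) *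
          ∑ P, ENNReal.ofReal (pairEnergy w ε M f (k ∘ pairPerm P)) := by
          refine ENNReal.tsum_le_tsum fun k => ?_
          rw [← ENNReal.ofReal_sum_of_nonneg fun P _ => pairEnergy_nonneg w ε hM0 f _,
            ← ENNReal.ofReal_mul (by positivity)]
          exact ENNReal.ofReal_le_ofReal (sigma'_mul_norm_Aplus_sq_le w hε f k)
      _ = ENNReal.ofReal ((((n : ℝ) + 2) ^ 2)⁻¹) * ∑ _P : PositionPair n, T := by
          rw [ENNReal.tsum_mul_left, Summable.tsum_finsetSum fun _ _ => ENNReal.summable]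
          simp only [tsum_comp_perm fun q => ENNReal.ofReal (pairEnergy w ε M f q), T]
      _ = _ := by
          rw [Finset.sum_const, Finset.card_univ, nsmul_eq_mul, ENNReal.ofReal_natCast]
  refine (mul_le_mul_right tsum_le _).trans_eq ?_
  simp only [← mul_assoc]
  congr 1
  rw [← ENNReal.toReal_eq_toReal_iff' (by finiteness) (by finiteness)]
  simp only [ENNReal.toReal_mul, ENNReal.toReal_natCast, ENNReal.toReal_inv, ENNReal.toReal_ofNat]
  rw [ENNReal.toReal_ofReal (by positivity), ENNReal.toReal_ofReal hM0, Nat.cast_succ]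
  exact factorial_mul_inv_sq_mul_card_positionPair n

theorem eventually_energy_sigma'_Aplus_le {w : Fin 2 → ℝ} (hw : w ≠ 0) (n : ℕ) {δ : ℝ}
    (hδ : 0 < δ) :
    ∀ᶠ ε in 𝓝[>] 0, ∀ f : Chaos 2 (n + 1), Symm f → energy (sigma' w ε) (Aplus 2 w ε f) ≤
      energy (fun k => wdotSq w k / 2 * (Geps (wnSq w) ε (wSq k / 2) + δ)) f := by
  filter_upwards [self_mem_nhdsWithin,
    eventually_sum_Jind_mul_sigma'_le hw n (Nat.cast_nonneg (Fintype.card (PositionPair n))) hδ]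
    with ε hε fibre_le f hf
  set X : (Fin (n + 1) → ZLat 2) → ℝ := fun k =>
    (Geps (wnSq w) ε (wSq k / 2) + δ) * ‖f k‖ ^ 2
  have hX k : 0 ≤ X k := mul_nonneg (add_nonneg (Geps_nonneg (wnSq_pos hw).le
    (div_nonneg (wSq_nonneg k) zero_le_two)) hδ.le) (sq_nonneg _)
  have hX_symm (τ : Equiv.Perm (Fin (n + 1))) k : X (k ∘ τ) = X k := by
    simp only [X, wSq_comp_perm, hf τ k]
  calc energy (sigma' w ε) (Aplus 2 w ε f)
      ≤ ((n + 1).factorial : ℝ≥0∞) * (2⁻¹ * ((n + 1 : ℕ) *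
        ∑' k, ∑' l, ENNReal.ofReal (pairEnergy w ε (Fintype.card (PositionPair n)) f
          (splitFirst k l)))) := by
        rw [← tsum_pairEnergy_eq]
        exact energy_sigma'_Aplus_le_tsum_pairEnergy w hε f
    _ ≤ ((n + 1).factorial : ℝ≥0∞) * (2⁻¹ * ((n + 1 : ℕ) *
        ∑' k, ENNReal.ofReal (dotw w (k 0) ^ 2 * X k))) := by
        gcongr with k
        exact tsum_pairEnergy_splitFirst_le (Nat.cast_nonneg _) (fibre_le k) f
    _ = ((n + 1).factorial : ℝ≥0∞) * (2⁻¹ * ∑' k, ENNReal.ofReal (wdotSq w k * X k)) := by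
        rw [succ_mul_tsum_ofReal_eq (fun x => sq_nonneg (dotw w x)) hX hX_symm]
        rfl
    _ = energy (fun k => wdotSq w k / 2 * (Geps (wnSq w) ε (wSq k / 2) + δ)) f := by
        rw [energy, ← ENNReal.tsum_mul_left]
        congr 1
        refine tsum_congr fun k => ?_
        rw [← ENNReal.ofReal_ofNat 2, ← ENNReal.ofReal_inv_of_pos two_pos,
          ← ENNReal.ofReal_mul (by positivity)]
        congr 1
        simp only [X]
        ring

end AplusEstimate

section AprioriEstimate

open ENNReal Filter Topology

variable {n : ℕ}

lemma mul_norm_inv_smul_add_sq_le {E : Type*} [NormedAddCommGroup E] [NormedSpace ℝ E] {P Y : ℝ}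
    (hP : 0 < P) (hY : 0 ≤ Y) (v g : E) :
    (3 * P + 4 * Y) * ‖(P + Y)⁻¹ • (v + g)‖ ^ 2 ≤
      4 * (P + Y)⁻¹ * ‖v‖ ^ 2 + 16 * P⁻¹ * ‖g‖ ^ 2 := by
  have hD : 0 < P + Y := by positivity
  set x := ‖(P + Y)⁻¹ • (v + g)‖
  have norm_add : ‖v + g‖ = (P + Y) * x := by
    simp only [x]
    rw [norm_smul_of_nonneg (inv_pos.2 hD).le, mul_inv_cancel_left₀ hD.ne']
  have sq_le : ((P + Y) * x - ‖g‖) ^ 2 ≤ ‖v‖ ^ 2 := by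
    refine sq_le_sq' ?_ ?_
    · linarith [norm_sub_le (v + g) v, norm_add, add_sub_cancel_left v g ▸ norm_sub_le (v + g) v]
    · linarith [norm_add_le v g]
  have young : 0 ≤ P⁻¹ * (P * x - 4 * ‖g‖) ^ 2 := by positivity
  have young_expand : P⁻¹ * (P * x - 4 * ‖g‖) ^ 2 =
      P * x ^ 2 - 8 * (x * ‖g‖) + 16 * P⁻¹ * ‖g‖ ^ 2 := by
    field
  have resolvent_expand : (P + Y)⁻¹ * ((P + Y) * x - ‖g‖) ^ 2 =
      (P + Y) * x ^ 2 - 2 * (x * ‖g‖) + (P + Y)⁻¹ * ‖g‖ ^ 2 := by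
    field
  have := mul_le_mul_of_nonneg_left sq_le (inv_pos.2 hD).le
  have : 0 ≤ (P + Y)⁻¹ * ‖g‖ ^ 2 := by positivity
  linarith

lemma three_mul_energy_add_le {w : Fin 2 → ℝ} {ε : ℝ} {u v g : Chaos 2 n}
    (hu : ∀ k, u k = ((sigma' w ε k : ℝ) : ℂ) * (v k + g k)) :
    3 * energy (fun k => wSq k / 2) u + 4 * energy (diffusionWeight w ε) u ≤
      4 * energy (sigma' w ε) v + 16 * energy (fun k => (wSq k / 2)⁻¹) g := by
  have pointwise (k : Fin n → ZLat 2) : (3 * (wSq k / 2) + 4 * diffusionWeight w ε k) * ‖u k‖ ^ 2 ≤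
      4 * sigma' w ε k * ‖v k‖ ^ 2 + 16 * (wSq k / 2)⁻¹ * ‖g k‖ ^ 2 := by
    obtain hP | hP := (wSq_nonneg k).eq_or_lt
    · have hdot : wdotSq w k = 0 :=
        le_antisymm ((wdotSq_le w k).trans_eq (by rw [← hP, mul_zero])) (wdotSq_nonneg w k)
      simp [← hP, hdot, diffusionWeight, sigma'_eq_inv]
    · rw [hu, ← Complex.real_smul, sigma'_eq_inv]
      exact mul_norm_inv_smul_add_sq_le (half_pos hP) (diffusionWeight_nonneg w ε k) (v k) (g k)
  have := energy_le_add_energy pointwise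
  rw [energy_add (fun k => by linarith [wSq_nonneg k]) fun k => by
    linarith [diffusionWeight_nonneg w ε k]] at this
  simpa only [energy_ofNat_mul] using this

lemma eventually_four_mul_energy_sigma'_Aplus_le {w : Fin 2 → ℝ} (hw : w ≠ 0) (n : ℕ) :
    ∀ᶠ ε in 𝓝[>] 0, ∀ f : Chaos 2 (n + 1), Symm f →
      4 * energy (sigma' w ε) (Aplus 2 w ε f) ≤
        energy (fun k => wSq k / 2) f + 4 * energy (diffusionWeight w ε) f := by
  have hc := wnSq_pos hw
  filter_upwards [eventually_energy_sigma'_Aplus_le hw n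
    (δ := 1 / (4 * wnSq w)) (by positivity)] with ε hε f hf
  have weight_le (k : Fin (n + 1) → ZLat 2) :
      4 * (wdotSq w k / 2 * (Geps (wnSq w) ε (wSq k / 2) + 1 / (4 * wnSq w))) ≤
        wSq k / 2 + 4 * diffusionWeight w ε k := by
    have : wdotSq w k / wnSq w ≤ wSq k := (div_le_iff₀' hc).2 (wdotSq_le w k)
    calc _ = wdotSq w k / wnSq w / 2 + 4 * diffusionWeight w ε k := by
          rw [diffusionWeight]
          field
      _ ≤ _ := by gcongr
  calc 4 * energy (sigma' w ε) (Aplus 2 w ε f)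
      ≤ 4 * energy _ f := mul_le_mul_right (hε f hf) 4
    _ ≤ energy (fun k => wSq k / 2 + 4 * diffusionWeight w ε k) f := by
        rw [← energy_ofNat_mul]
        exact energy_mono weight_le f
    _ = _ := by
        rw [energy_add (fun k => by linarith [wSq_nonneg k]) fun k =>
          mul_nonneg zero_le_four (diffusionWeight_nonneg w ε k), energy_ofNat_mul]

lemma sum_le_eight_mul_sum_of_step {a b c : ℕ → ℝ≥0∞} (ha : a 0 = 0) (hb : b 0 = 0) {N : ℕ}
    (h : ∀ t < N, 3 * a (t + 1) + 4 * b (t + 1) ≤ a t + 4 * b t + 16 * c (t + 1)) :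
    ∑ t ∈ Finset.range N, a (t + 1) ≤ 8 * ∑ t ∈ Finset.range N, c (t + 1) := by
  have telescoped : 2 * ∑ t ∈ Finset.range N, a (t + 1) + (a N + 4 * b N) ≤
      16 * ∑ t ∈ Finset.range N, c (t + 1) := by
    induction N with
    | zero => simp [ha, hb]
    | succ N ih =>
      rw [Finset.sum_range_succ, Finset.sum_range_succ]
      calc 2 * (∑ t ∈ Finset.range N, a (t + 1) + a (N + 1)) + (a (N + 1) + 4 * b (N + 1))
          = 2 * ∑ t ∈ Finset.range N, a (t + 1) + (3 * a (N + 1) + 4 * b (N + 1)) := by ring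
        _ ≤ 2 * ∑ t ∈ Finset.range N, a (t + 1) + (a N + 4 * b N + 16 * c (N + 1)) := by
            exact add_le_add_right (h N N.lt_succ_self) _
        _ = (2 * ∑ t ∈ Finset.range N, a (t + 1) + (a N + 4 * b N)) + 16 * c (N + 1) := by ring
        _ ≤ 16 * ∑ t ∈ Finset.range N, c (t + 1) + 16 * c (N + 1) := by
            gcongr
            exact ih fun t ht => h t (ht.trans N.lt_succ_self)
        _ = _ := by ring
  refine (ENNReal.mul_le_mul_iff_right two_ne_zero ofNat_ne_top).1
    ((le_self_add.trans telescoped).trans_eq ?_)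
  rw [← mul_assoc]
  norm_num

lemma sobSq_eq_toReal_energy {d : ℕ} (s : ℝ) (f : Chaos d n) :
    sobSq s f = (energy (fun k => (wSq k / 2) ^ (2 * s)) f).toReal := by
  have term_nonneg k : 0 ≤ (wSq k / 2) ^ (2 * s) * ‖f k‖ ^ 2 :=
    mul_nonneg (Real.rpow_nonneg (div_nonneg (wSq_nonneg k) zero_le_two) _) (sq_nonneg _)
  rw [energy, ENNReal.toReal_mul, ENNReal.toReal_natCast,
    ENNReal.tsum_toReal_eq fun _ => ENNReal.ofReal_ne_top]
  simp only [ENNReal.toReal_ofReal (term_nonneg _)]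
  rfl

lemma sobSq_half {d : ℕ} (f : Chaos d n) :
    sobSq (1 / 2) f = (energy (fun k => wSq k / 2) f).toReal := by
  rw [sobSq_eq_toReal_energy]
  norm_num

lemma sobSq_neg_half {d : ℕ} (f : Chaos d n) :
    sobSq (-(1 / 2)) f = (energy (fun k => (wSq k / 2)⁻¹) f).toReal := by
  rw [sobSq_eq_toReal_energy]
  norm_num [Real.rpow_neg_one]

lemma energy_inv_ne_top {d : ℕ} {f : Chaos d n} (hf : Summable (sobTerm (-(1 / 2)) f)) :
    energy (fun k => (wSq k / 2)⁻¹) f ≠ ⊤ := by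
  refine ENNReal.mul_ne_top (ENNReal.natCast_ne_top _) ?_
  convert hf.tsum_ofReal_ne_top using 4 with k
  rw [sobTerm, mul_neg, mul_one_div_cancel two_ne_zero, Real.rpow_neg_one]

lemma Symm.ansatz {w : Fin 2 → ℝ} {ε : ℝ} {i n : ℕ} {g u : (t : ℕ) → Chaos 2 (t + 1)}
    (hi : 2 ≤ i) (hg : ∀ t, Symm (g t)) (hu_zero : ∀ t, t + 1 < i → u t = 0)
    (hu : ∀ t, i ≤ t + 2 → t + 2 ≤ n → ∀ k, u (t + 1) k =
      ((sigma' w ε k : ℝ) : ℂ) * (Aplus 2 w ε (u t) k + g (t + 1) k)) :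
    ∀ t, t + 1 ≤ n → Symm (u t) := by
  have symm_zero (t : ℕ) (ht : t + 1 < i) : Symm (u t) := by
    rw [hu_zero t ht]
    exact fun _ _ => rfl
  intro t ht
  induction t with
  | zero => exact symm_zero 0 hi
  | succ t ih =>
    obtain h | h := le_or_gt i (t + 2)
    · rw [funext (hu t h ht)]
      exact (((ih (by omega)).aplus w ε).add (hg (t + 1))).sigma'_mul
    · exact symm_zero (t + 1) h

lemma sum_toReal_le_mul_sum_toReal {ι : Type*} {s : Finset ι} {a c : ι → ℝ≥0∞} {C : ℝ≥0∞}
    (hC : C ≠ ⊤) (hc : ∀ i ∈ s, c i ≠ ⊤) (h : ∑ i ∈ s, a i ≤ C * ∑ i ∈ s, c i) :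
    ∑ i ∈ s, (a i).toReal ≤ C.toReal * ∑ i ∈ s, (c i).toReal := by
  have rhs_ne_top : C * ∑ i ∈ s, c i ≠ ⊤ := ENNReal.mul_ne_top hC (ENNReal.sum_ne_top.2 hc)
  rw [← ENNReal.toReal_sum hc, ← ENNReal.toReal_mul,
    ← ENNReal.toReal_sum (ENNReal.sum_ne_top.1 (ne_top_of_le_ne_top rhs_ne_top h))]
  exact ENNReal.toReal_mono rhs_ne_top h

lemma sum_sobSq_ansatz_le {w : Fin 2 → ℝ} {ε : ℝ} {i n : ℕ} {g u : (t : ℕ) → Chaos 2 (t + 1)}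
    (hi : 2 ≤ i)
    (hA : ∀ t < n, ∀ f : Chaos 2 (t + 1), Symm f →
      4 * energy (sigma' w ε) (Aplus 2 w ε f) ≤
        energy (fun k => wSq k / 2) f + 4 * energy (diffusionWeight w ε) f)
    (hg : ∀ t, Symm (g t)) (hg_summable : ∀ t, Summable (sobTerm (-(1 / 2)) (g t)))
    (hu_zero : ∀ t, t + 1 < i → u t = 0)
    (hu : ∀ t, i ≤ t + 2 → t + 2 ≤ n → ∀ k, u (t + 1) k =
      ((sigma' w ε k : ℝ) : ℂ) * (Aplus 2 w ε (u t) k + g (t + 1) k)) :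
    ∑ j ∈ Finset.Icc i n, sobSq (1 / 2) (u (j - 1)) ≤
      8 * ∑ j ∈ Finset.Icc i n, sobSq (-(1 / 2)) (g (j - 1)) := by
  obtain ⟨i, rfl⟩ := Nat.exists_eq_add_of_le' hi
  have u_first : u i = 0 := hu_zero i (by omega)
  have step (s : ℕ) (hs : s < n + 1 - (i + 2)) :
      3 * energy (fun k => wSq k / 2) (u (i + (s + 1))) +
          4 * energy (diffusionWeight w ε) (u (i + (s + 1))) ≤
        energy (fun k => wSq k / 2) (u (i + s)) + 4 * energy (diffusionWeight w ε) (u (i + s)) +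
          16 * energy (fun k => (wSq k / 2)⁻¹) (g (i + (s + 1))) :=
    (three_mul_energy_add_le (hu (i + s) (by omega) (by omega))).trans
      (add_le_add_left (hA _ (by omega) _ (Symm.ansatz hi hg hu_zero hu _ (by omega))) _)
  have energy_le := sum_le_eight_mul_sum_of_step
    (a := fun s => energy (fun k => wSq k / 2) (u (i + s)))
    (b := fun s => energy (diffusionWeight w ε) (u (i + s)))
    (c := fun s => energy (fun k => (wSq k / 2)⁻¹) (g (i + s)))
    ((congrArg (energy _) u_first).trans (energy_zero _))
    ((congrArg (energy _) u_first).trans (energy_zero _)) step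
  have sum_Icc (F : ℕ → ℝ) :
      ∑ j ∈ Finset.Icc (i + 2) n, F (j - 1) =
        ∑ s ∈ Finset.range (n + 1 - (i + 2)), F (i + (s + 1)) := by
    rw [← Finset.Ico_add_one_right_eq_Icc, Finset.sum_Ico_eq_sum_range]
    exact Finset.sum_congr rfl fun s _ => congrArg F (by omega)
  rw [sum_Icc fun t => sobSq (1 / 2) (u t), sum_Icc fun t => sobSq (-(1 / 2)) (g t)]
  simp only [sobSq_half, sobSq_neg_half]
  exact sum_toReal_le_mul_sum_toReal ofNat_ne_top
    (fun _ _ => energy_inv_ne_top (hg_summable _)) energy_le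

theorem stmt9_general (w : Fin 2 → ℝ) (hw : w ≠ 0) (n : ℕ) :
    ∃ ε₂ : ℝ, 0 < ε₂ ∧
      ∀ ε : ℝ, 0 < ε → ε < ε₂ →
      ∀ i m : ℕ, 2 ≤ i →
      ∀ g u : (t : ℕ) → Chaos 2 (t + 1),
        (∀ t, Symm (g t)) → (∀ t, SuppOk (g t)) →
        (∀ t, Summable (sobTerm (-(1 / 2)) (g t))) →
        (∀ t, m < t + 1 → g t = 0) →
        (∀ t, t + 1 < i → u t = 0) →
        (∀ t, i ≤ t + 2 → t + 2 ≤ n → ∀ k : Fin (t + 2) → ZLat 2,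
          u (t + 1) k = ((sigma' w ε k : ℝ) : ℂ) * (Aplus 2 w ε (u t) k + g (t + 1) k)) →
        ∑ j ∈ Finset.Icc i n, sobSq (1 / 2) (u (j - 1)) ≤
          8 * ∑ j ∈ Finset.Icc i m, sobSq (-(1 / 2)) (g (j - 1)) := by
  obtain ⟨ε₂, hε₂, hA⟩ := mem_nhdsGT_iff_exists_Ioo_subset.1 <|
    (eventually_all_finset (Finset.range n)).2 fun t _ =>
      eventually_four_mul_energy_sigma'_Aplus_le hw t
  refine ⟨ε₂, hε₂, fun ε hε hεε₂ i m hi g u hg _ hg_summable hg_zero hu_zero hu => ?_⟩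
  have hA_ε := hA ⟨hε, hεε₂⟩
  refine (sum_sobSq_ansatz_le hi (fun t ht => hA_ε t (Finset.mem_range.2 ht)) hg hg_summable
    hu_zero hu).trans (mul_le_mul_of_nonneg_left ?_ (by norm_num))
  have g_support (j : ℕ) (_ : j ∈ Finset.Icc i n) (hj : sobSq (-(1 / 2)) (g (j - 1)) ≠ 0) :
      j ≤ m := by
    contrapose! hj
    rw [hg_zero (j - 1) (by omega), sobSq_neg_half, energy_zero, ENNReal.toReal_zero]
  rw [← Finset.sum_filter_of_ne g_support]
  refine Finset.sum_le_sum_of_subset_of_nonneg (fun j hj => ?_) fun j _ _ => ?_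
  · simp only [Finset.mem_filter, Finset.mem_Icc] at hj ⊢
    omega
  · exact (sobSq_neg_half (g (j - 1))).symm ▸ ENNReal.toReal_nonneg

end AprioriEstimate

/-- a priori estimate for the two-dimensional ansatz.
Here `u t : ΓL²_{t+1}` plays the role of `ũ_{t+1}`: the recursion
`ũ_j = S^ε A⁺_ε ũ_{j−1} + S^ε g_j` holds for `i ≤ j ≤ n`, with `ũ_{j} = 0` for `j < i`
and `g_j = 0` for `j ∉ {i,…,m}`.  There are `C > 0` independent of `n` and `ε`, and,
for each `n`, an `ε₂(n) > 0`, such that for all `ε < ε₂(n)`,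
`Σ_{j=i}^n ‖(−L₀)^{1/2} ũ_j‖² ≤ C Σ_{j=i}^m ‖(−L₀)^{−1/2} g_j‖²`. -/
theorem stmt9 (w : Fin 2 → ℝ) (hw : w ≠ 0)
    (i m : ℕ) (hi : i = 2 ∨ i = 3) (him : i ≤ m) :
    ∃ C : ℝ, 0 < C ∧
      ∀ n : ℕ, m ≤ n →
      ∃ ε₂ : ℝ, 0 < ε₂ ∧
        ∀ ε : ℝ, 0 < ε → ε < ε₂ → ε < 1 →
        ∀ g u : (t : ℕ) → Chaos 2 (t+1),
          (∀ t, Symm (g t)) → (∀ t, SuppOk (g t)) →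
          (∀ t, Summable (sobTerm (-(1/2) : ℝ) (g t))) →
          (∀ t, t+1 < i ∨ m < t+1 → g t = 0) →
          (∀ t, t+1 < i → u t = 0) →
          (∀ t, i ≤ t+2 → t+2 ≤ n → ∀ k : Fin (t+2) → ZLat 2,
            u (t+1) k = ((sigma' w ε k : ℝ) : ℂ) * (Aplus 2 w ε (u t) k + g (t+1) k)) →
          ∑ j ∈ Finset.Icc i n, sobSq (1/2 : ℝ) (u (j-1)) ≤
            C * ∑ j ∈ Finset.Icc i m, sobSq (-(1/2) : ℝ) (g (j-1)) := by
  refine ⟨8, by norm_num, fun n _ => ?_⟩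
  obtain ⟨ε₂, hε₂, bound⟩ := stmt9_general w hw n
  exact ⟨ε₂, hε₂, fun ε hε hεε₂ _ g u hg hg_supp hg_summable hg_zero =>
    bound ε hε hεε₂ i m (by omega) g u hg hg_supp hg_summable fun t ht => hg_zero t (.inr ht)⟩

end SBE
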